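/- arXiv:1707.04778 — 3 statements merged into one kernel-verified Lean document; each statement's English description precedes it below -/
import Mathlib

section
/- Let X be a Polish space, Ω = C([0,∞) → X) with the compact-open topology, ℱ its Borel σ-algebra, (ℱ_t) the natural filtration, 𝒫 the Borel probability measures on Ω with the weak topology, and Ω_x = {w : w(0)=x}. Let 𝒞 : X → 2^𝒫 satisfy: (C1) 𝒞(x) is a nonempty compact convex subset of 𝒫 for every x; (C2) {x : 𝒞(x) ∩ K ≠ ∅} is Borel for every closed K ⊆ 𝒫; (C3) P(Ω_x) = 1 for every P ∈ 𝒞(x). Assume further that for every finite stopping time τ: (MP1) if P ∈ 𝒞(x), then P[θ_τ^{-1}(·)|ℱ_τ](w) ∈ 𝒞(w(τ(w))) for P-almost all w; and (MP2) if Q is an ℱ_τ-measurable selection of w ↦ 𝒞(w(τ(w))) and P ∈ 𝒞(x), then P ⊗_τ Q ∈ 𝒞(x). Then there exists a measurable selection x ↦ P_x ∈ 𝒞(x) with the strong Markov property: for every stopping time τ and every x, P_x[θ_τ^{-1}(·)|ℱ_τ](w) = P_{π_τ(w)}(·) for P_x-almost all w. -/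
open MeasureTheory Set
open scoped NNReal

noncomputable section

/-- The space `Ω = C([0,∞) → X)` with the compact-open topology. -/
abbrev IPath (X : Type*) [TopologicalSpace X] : Type _ := C(ℝ≥0, X)

variable {X : Type*} [TopologicalSpace X]

/-- The Borel σ-algebra `ℱ` on the path space. -/
instance : MeasurableSpace (IPath X) := borel _
instance : BorelSpace (IPath X) := ⟨rfl⟩

/-- The natural filtration `ℱ_s` on path space. -/
def natF (X : Type*) [TopologicalSpace X] [MeasurableSpace X] (s : ℝ≥0) :
    MeasurableSpace (IPath X) :=
  ⨆ t ∈ Iic s, MeasurableSpace.comap (fun w : IPath X => w t) inferInstance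

/-- A (finite) stopping time with respect to the natural filtration:
`{τ ≤ s} ∈ ℱ_s` for all `s`. -/
def IsStopT {X : Type*} [TopologicalSpace X] [MeasurableSpace X]
    (τ : IPath X → ℝ≥0) : Prop :=
  ∀ s : ℝ≥0, MeasurableSet[natF X s] {w : IPath X | τ w ≤ s}

/-- Membership in the σ-algebra `ℱ_τ`:
`A ∈ ℱ` with `A ∩ {τ ≤ s} ∈ ℱ_s` for all `s`. -/
def MemFstopT {X : Type*} [TopologicalSpace X] [MeasurableSpace X]
    (τ : IPath X → ℝ≥0) (A : Set (IPath X)) : Prop :=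
  MeasurableSet A ∧
    ∀ s : ℝ≥0, MeasurableSet[natF X s] (A ∩ {w : IPath X | τ w ≤ s})

/-- The random shift `θ_τ : w(·) ↦ w(τ(w) + ·)`. -/
def shiftAt (τ : IPath X → ℝ≥0) (w : IPath X) : IPath X :=
  w.comp ⟨fun t => τ w + t, by fun_prop⟩

/-- The coordinate map `π_τ(w) = w(τ(w))`. -/
def piAt (τ : IPath X → ℝ≥0) (w : IPath X) : X := w (τ w)

/-- Convexity of a set of probability measures. -/
def ConvexMeasSet {Ω' : Type*} [MeasurableSpace Ω']
    (C : Set (ProbabilityMeasure Ω')) : Prop :=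
  ∀ P ∈ C, ∀ Q ∈ C, ∀ a b : ℝ≥0, a + b = 1 →
    ∀ R : ProbabilityMeasure Ω',
      (R : Measure Ω') = a • (P : Measure Ω') + b • (Q : Measure Ω') → R ∈ C

set_option linter.unusedSectionVars false
set_option linter.style.haveILetI false

section PathMeas

open Filter Topology ENNReal

/-- Sets of the compact-open subbasis belong to the evaluation σ-algebra. -/
theorem mapsTo_meas {X : Type*} [TopologicalSpace X] [PolishSpace X] [MeasurableSpace X]
    [BorelSpace X] {α : Type*} [MeasurableSpace α] {f : α → IPath X}
    (h : ∀ t, Measurable fun a => f a t) (K : Set ℝ≥0) (hK : IsCompact K) (U : Set X)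
    (hU : IsOpen U) : MeasurableSet {a | MapsTo (f a) K U} := by
  letI := TopologicalSpace.upgradeIsCompletelyMetrizable X
  obtain ⟨D, hDK, hDc, hDd⟩ : ∃ D : Set ℝ≥0, D ⊆ K ∧ D.Countable ∧ K ⊆ closure D := by
    exact TopologicalSpace.IsSeparable.of_separableSpace K |>.exists_countable_dense_subset
  have key : {a | MapsTo (f a) K U} =
      ⋃ n : ℕ, ⋂ q ∈ D, {a | ((n : ℝ≥0∞) + 1)⁻¹ ≤ Metric.infEDist (f a q) Uᶜ} := by
    ext a
    simp only [mem_ofPred_eq, mem_iUnion, mem_iInter]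
    constructor
    · intro hm
      have hc : IsCompact (f a '' K) := hK.image (f a).continuous
      have hcov : f a '' K ⊆ ⋃ n : ℕ, {y | ((n : ℝ≥0∞) + 1)⁻¹ < Metric.infEDist y Uᶜ} := by
        rintro _ ⟨t, ht, rfl⟩
        have : 0 < Metric.infEDist (f a t) Uᶜ := by
          rw [pos_iff_ne_zero]
          intro h0
          rw [← Metric.mem_closure_iff_infEDist_zero, hU.isClosed_compl.closure_eq] at h0
          exact h0 (hm ht)
        obtain ⟨n, hn⟩ := ENNReal.exists_inv_nat_lt this.ne'
        refine mem_iUnion.2 ⟨n, lt_of_le_of_lt ?_ hn⟩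
        exact ENNReal.inv_le_inv.2 le_self_add
      obtain ⟨n, hn⟩ := hc.elim_directed_cover _ (fun n =>
        isOpen_lt continuous_const Metric.continuous_infEDist) hcov
        (directed_of_isDirected_le (fun i j hij y hy => lt_of_le_of_lt (
          ENNReal.inv_le_inv.2 (by gcongr : (i : ℝ≥0∞) + 1 ≤ (j : ℝ≥0∞) + 1)) hy))
      exact ⟨n, fun q hq => (hn ⟨q, hDK hq, rfl⟩).le⟩
    · rintro ⟨n, hn⟩ t ht
      have hcl : IsClosed {t | ((n : ℝ≥0∞) + 1)⁻¹ ≤ Metric.infEDist (f a t) Uᶜ} :=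
        isClosed_le continuous_const (Metric.continuous_infEDist.comp (f a).continuous)
      have h1 : t ∈ {t | ((n : ℝ≥0∞) + 1)⁻¹ ≤ Metric.infEDist (f a t) Uᶜ} :=
        closure_minimal hn hcl (hDd ht)
      by_contra hU'
      have h0 : Metric.infEDist (f a t) Uᶜ = 0 := Metric.infEDist_zero_of_mem hU'
      simp only [mem_ofPred_eq, h0, nonpos_iff_eq_zero, ENNReal.inv_eq_zero] at h1
      exact (ENNReal.add_ne_top.2 ⟨ENNReal.natCast_ne_top n, ENNReal.one_ne_top⟩) h1
  rw [key]
  refine MeasurableSet.iUnion fun n => MeasurableSet.biInter hDc fun q _ => ?_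
  exact measurableSet_le measurable_const (Metric.continuous_infEDist.measurable.comp (h q))

theorem measurable_path {X : Type*} [TopologicalSpace X] [PolishSpace X] [MeasurableSpace X]
    [BorelSpace X] {α : Type*} [MeasurableSpace α] {f : α → IPath X}
    (h : ∀ t, Measurable fun a => f a t) : Measurable f := by
  have hb : borel (IPath X) = _ :=
    borel_eq_generateFrom_of_subbasis (α := C(ℝ≥0, X)) ContinuousMap.compactOpen_eq
  have : ∀ s ∈ (image2 (fun (K : Set ℝ≥0) (U : Set X) => {f : C(ℝ≥0, X) | MapsTo f K U})
      {K | IsCompact K} {U | IsOpen U}), MeasurableSet (f ⁻¹' s) := by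
    rintro _ ⟨K, hK, U, hU, rfl⟩
    exact mapsTo_meas h K hK U hU
  intro s hs
  have hs' : MeasurableSet[borel (IPath X)] s := hs
  rw [hb] at hs'
  exact measurable_generateFrom this hs'

variable {X : Type*} [TopologicalSpace X] [PolishSpace X] [MeasurableSpace X] [BorelSpace X]

theorem measurable_ev₂ : Measurable fun p : IPath X × ℝ≥0 => p.1 p.2 := by
  have : Continuous fun p : C(ℝ≥0, X) × ℝ≥0 => p.1 p.2 := by fun_prop
  exact this.measurable

theorem measurable_ev (t : ℝ≥0) : Measurable fun w : IPath X => w t := by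
  have : Continuous fun w : C(ℝ≥0, X) => w t := by fun_prop
  exact this.measurable

theorem measurable_evf {α : Type*} [MeasurableSpace α] {f : α → IPath X} {g : α → ℝ≥0}
    (hf : Measurable f) (hg : Measurable g) : Measurable fun a => f a (g a) :=
  measurable_ev₂.comp (hf.prodMk hg)

/-- Path stopped at `r`. -/
def stopP {X : Type*} [TopologicalSpace X] (r : ℝ≥0) (w : IPath X) : IPath X :=
  w.comp ⟨fun t => min t r, by fun_prop⟩

theorem stopP_apply (r t : ℝ≥0) (w : IPath X) : stopP r w t = w (min t r) := rfl

theorem natF_iff (s : ℝ≥0) (A : Set (IPath X)) : MeasurableSet[natF X s] A ↔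
    MeasurableSet A ∧ ∀ w w' : IPath X, (∀ t ≤ s, w t = w' t) → w ∈ A → w' ∈ A := by
  constructor
  · intro h
    have hle : natF X s ≤ (inferInstance : MeasurableSpace (IPath X)) := by
      refine iSup₂_le fun t _ => ?_
      rw [← measurable_iff_comap_le]
      exact measurable_ev t
    refine ⟨hle _ h, ?_⟩
    let m : MeasurableSpace (IPath X) :=
      { MeasurableSet' := fun A => ∀ w w' : IPath X, (∀ t ≤ s, w t = w' t) → (w ∈ A ↔ w' ∈ A)
        measurableSet_empty := by simp
        measurableSet_compl := fun A hA w w' h => not_congr (hA w w' h)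
        measurableSet_iUnion := fun f hf w w' h => by
          simp only [mem_iUnion]
          exact exists_congr fun i => hf i w w' h }
    have hm : natF X s ≤ m := by
      refine iSup₂_le fun t ht => ?_
      rintro _ ⟨B, hB, rfl⟩ w w' h
      simp only [mem_preimage, h t ht]
    exact fun w w' hw => (hm _ h w w' hw).1
  · rintro ⟨hA, hinv⟩
    have : A = stopP s ⁻¹' A := by
      ext w
      have h1 : ∀ t ≤ s, w t = stopP s w t := fun t ht => by
        simp [stopP_apply, min_eq_left ht]
      exact ⟨hinv _ _ h1, hinv _ _ fun t ht => (h1 t ht).symm⟩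
    rw [this]
    refine @measurable_path X _ _ _ _ _ (natF X s) (stopP s) (fun t => ?_) A hA
    have h2 : MeasurableSpace.comap (fun w : IPath X => w (min t s)) inferInstance ≤ natF X s :=
      le_iSup₂_of_le (f := fun t (_ : t ∈ Iic s) =>
        MeasurableSpace.comap (fun w : IPath X => w t) inferInstance) (min t s)
        (min_le_right t s) le_rfl
    exact measurable_iff_comap_le.2 h2

variable {τ : IPath X → ℝ≥0}

theorem stop_eq (hτ : IsStopT τ) {w w' : IPath X} (h : ∀ t ≤ τ w, w t = w' t) : τ w' = τ w := by
  have h1 : τ w' ≤ τ w := ((natF_iff _ _).1 (hτ (τ w))).2 w w' h (mem_ofPred.2 le_rfl)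
  have h2 : τ w ≤ τ w' :=
    ((natF_iff _ _).1 (hτ (τ w'))).2 w' w (fun t ht => (h t (ht.trans h1)).symm) (mem_ofPred.2 le_rfl)
  exact le_antisymm h1 h2

theorem stop_meas (hτ : IsStopT τ) : Measurable τ :=
  measurable_of_Iic fun s => ((natF_iff _ _).1 (hτ s)).1

theorem memF_iff (hτ : IsStopT τ) (A : Set (IPath X)) : MemFstopT τ A ↔
    MeasurableSet A ∧ ∀ w w' : IPath X, (∀ t ≤ τ w, w t = w' t) → w ∈ A → w' ∈ A := by
  constructor
  · rintro ⟨hA, h⟩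
    refine ⟨hA, fun w w' hw hwA => ?_⟩
    exact (((natF_iff _ _).1 (h (τ w))).2 w w' hw ⟨hwA, mem_ofPred.2 le_rfl⟩).1
  · rintro ⟨hA, h⟩
    refine ⟨hA, fun s => (natF_iff _ _).2 ⟨hA.inter (((natF_iff _ _).1 (hτ s)).1), ?_⟩⟩
    rintro w w' hw ⟨hwA, hs⟩
    have h1 : ∀ t ≤ τ w, w t = w' t := fun t ht => hw t (ht.trans hs)
    exact ⟨h w w' h1 hwA, (stop_eq hτ h1).le.trans hs⟩

theorem meas_shift (hτ : Measurable τ) : Measurable (shiftAt τ) :=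
  measurable_path fun t => measurable_evf (f := fun w => w) (g := fun w => τ w + t) measurable_id (hτ.add_const t)

theorem meas_pi (hτ : Measurable τ) : Measurable (piAt τ) :=
  measurable_evf measurable_id hτ

theorem meas_stop (hτ : Measurable τ) : Measurable (fun w => stopP (τ w) w) :=
  measurable_path fun t => measurable_evf (f := fun w => w) (g := fun w => min t (τ w)) measurable_id
    (measurable_const.min hτ)

theorem stopP_agree (w : IPath X) (r : ℝ≥0) : ∀ t ≤ r, w t = stopP r w t := fun t ht => by
  simp [stopP_apply, min_eq_left ht]

theorem stopP_congr {w w' : IPath X} {r : ℝ≥0} (h : ∀ t ≤ r, w t = w' t) :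
    stopP r w = stopP r w' := by
  ext t
  exact h _ (min_le_right _ _)

theorem stop_stop (hτ : IsStopT τ) (w : IPath X) : τ (stopP (τ w) w) = τ w :=
  stop_eq hτ (stopP_agree w _)

theorem memF_stop_pre (hτ : IsStopT τ) {B : Set (IPath X)} (hB : MeasurableSet B) :
    MemFstopT τ ((fun w => stopP (τ w) w) ⁻¹' B) := by
  refine (memF_iff hτ _).2 ⟨meas_stop (stop_meas hτ) hB, fun w w' h hw => ?_⟩
  have h1 : stopP (τ w') w' = stopP (τ w) w := by
    rw [stop_eq hτ h]; exact (stopP_congr h).symm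
  simpa only [mem_preimage, h1] using hw

end PathMeas

section RCDsec

open Filter Topology ENNReal ProbabilityTheory

theorem meas_of_weak {Y : Type*} [TopologicalSpace Y] [HasOuterApproxClosed Y]
    [MeasurableSpace Y] [BorelSpace Y] {α : Type*} [MeasurableSpace α]
    {Q : α → ProbabilityMeasure Y}
    (hQ : ∀ U : Set (ProbabilityMeasure Y), IsOpen U → MeasurableSet (Q ⁻¹' U)) :
    Measurable fun a => (Q a : Measure Y) := by
  refine Measurable.measure_of_isPiSystem_of_isProbabilityMeasure
    (S := {s | IsOpen s}) (BorelSpace.measurable_eq) isPiSystem_isOpen ?_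
  intro G hG
  refine measurable_of_Ioi fun c => ?_
  have hl : LowerSemicontinuous fun μ : ProbabilityMeasure Y => (μ : Measure Y) G := by
    rw [lowerSemicontinuous_iff_le_liminf]
    intro μ
    exact ProbabilityMeasure.le_liminf_measure_open_of_tendsto tendsto_id hG
  exact hQ _ (hl.isOpen_preimage c)

variable {X : Type*} [TopologicalSpace X] [PolishSpace X] [MeasurableSpace X] [BorelSpace X]

/-- `ℱ_τ`-measurability of a measure-valued map. -/
def QM (τ : IPath X → ℝ≥0) (Q : IPath X → ProbabilityMeasure (IPath X)) : Prop :=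
  ∀ U : Set (ProbabilityMeasure (IPath X)), IsOpen U → MemFstopT τ (Q ⁻¹' U)

/-- Disintegration property. -/
def RC (P : ProbabilityMeasure (IPath X)) (τ : IPath X → ℝ≥0)
    (Q : IPath X → ProbabilityMeasure (IPath X)) : Prop :=
  ∀ A : Set (IPath X), MemFstopT τ A → ∀ B : Set (IPath X), MeasurableSet B →
    (P : Measure (IPath X)) (A ∩ shiftAt τ ⁻¹' B) =
      ∫⁻ w in A, (Q w : Measure (IPath X)) B ∂(P : Measure (IPath X))

variable {τ : IPath X → ℝ≥0} {Q : IPath X → ProbabilityMeasure (IPath X)}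

theorem QM.meas (hQ : QM τ Q) : Measurable fun w => (Q w : Measure (IPath X)) :=
  meas_of_weak fun U hU => (hQ U hU).1

theorem QM.inv (hτ : IsStopT τ) (hQ : QM τ Q) {w w' : IPath X} (h : ∀ t ≤ τ w, w t = w' t) :
    Q w' = Q w := by
  by_contra hne
  have ho : IsOpen ({Q w}ᶜ : Set (ProbabilityMeasure (IPath X))) := isOpen_compl_singleton
  have h1 := ((memF_iff hτ _).1 (hQ _ ho)).2 w' w
    (fun t ht => (h t (ht.trans (stop_eq hτ h).le)).symm) hne
  exact h1 rfl

theorem QM.of (hτ : IsStopT τ)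
    (hm : ∀ U : Set (ProbabilityMeasure (IPath X)), IsOpen U → MeasurableSet (Q ⁻¹' U))
    (hi : ∀ w w' : IPath X, (∀ t ≤ τ w, w t = w' t) → Q w' = Q w) : QM τ Q := by
  intro U hU
  refine (memF_iff hτ _).2 ⟨hm U hU, fun w w' h hw => ?_⟩
  rw [mem_preimage, hi w w' h]
  exact hw

theorem lint_eq (hτ : IsStopT τ) {P ν : Measure (IPath X)}
    (h : ∀ A, MemFstopT τ A → ν A = P A) {g : IPath X → ℝ≥0∞} (hg : Measurable g)
    (hi : ∀ w w' : IPath X, (∀ t ≤ τ w, w t = w' t) → g w' = g w) :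
    ∫⁻ w, g w ∂ν = ∫⁻ w, g w ∂P := by
  have hS := meas_stop (stop_meas hτ)
  have h1 : ∀ w, g w = g (stopP (τ w) w) := fun w => (hi w _ (stopP_agree w _)).symm
  have h2 : ∀ μ : Measure (IPath X), ∫⁻ w, g w ∂μ = ∫⁻ w, g w ∂(μ.map fun w => stopP (τ w) w) := by
    intro μ
    rw [lintegral_map hg hS]
    exact lintegral_congr h1
  rw [h2 ν, h2 P]
  congr 1
  ext B hB
  rw [Measure.map_apply hS hB, Measure.map_apply hS hB]
  exact h _ (memF_stop_pre hτ hB)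

theorem rc_lintegral (hτ : IsStopT τ) {P : ProbabilityMeasure (IPath X)} (hQ : QM τ Q)
    (hR : RC P τ Q) {h : IPath X × IPath X → ℝ≥0∞} (hh : Measurable h) :
    ∫⁻ w, h (stopP (τ w) w, shiftAt τ w) ∂(P : Measure (IPath X)) =
      ∫⁻ w, ∫⁻ w', h (stopP (τ w) w, w') ∂(Q w : Measure (IPath X)) ∂(P : Measure (IPath X)) := by
  have hS := meas_stop (stop_meas hτ)
  have hθ := meas_shift (stop_meas hτ)
  let κ : Kernel (IPath X) (IPath X) := ⟨fun w => (Q w : Measure (IPath X)), hQ.meas⟩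
  haveI : IsMarkovKernel κ := ⟨fun w => (Q w).2⟩
  have hm1 : Measurable fun w => (stopP (τ w) w, shiftAt τ w) := hS.prodMk hθ
  have hm2 : Measurable fun p : IPath X × IPath X => (stopP (τ p.1) p.1, p.2) :=
    (hS.comp measurable_fst).prodMk measurable_snd
  have hE : (P : Measure (IPath X)).map (fun w => (stopP (τ w) w, shiftAt τ w)) =
      ((P : Measure (IPath X)) ⊗ₘ κ).map (fun p => (stopP (τ p.1) p.1, p.2)) := by
    haveI := Measure.isFiniteMeasure_map (P : Measure (IPath X))
      (fun w => (stopP (τ w) w, shiftAt τ w))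
    refine Measure.ext_prod ?_
    intro A B hA hB
    rw [Measure.map_apply hm1 (hA.prod hB), Measure.map_apply hm2 (hA.prod hB)]
    have e1 : (fun w => (stopP (τ w) w, shiftAt τ w)) ⁻¹' (A ×ˢ B) =
      ((fun w => stopP (τ w) w) ⁻¹' A) ∩ shiftAt τ ⁻¹' B := rfl
    have e2 : (fun p : IPath X × IPath X => (stopP (τ p.1) p.1, p.2)) ⁻¹' (A ×ˢ B) =
      ((fun w => stopP (τ w) w) ⁻¹' A) ×ˢ B := rfl
    rw [e1, e2, Measure.compProd_apply_prod (hS hA) hB]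
    exact hR _ (memF_stop_pre hτ hA) B hB
  calc _ = ∫⁻ p, h p ∂((P : Measure (IPath X)).map (fun w => (stopP (τ w) w, shiftAt τ w))) :=
        (lintegral_map hh hm1).symm
    _ = _ := by
        rw [hE, lintegral_map hh hm2]
        exact Measure.lintegral_compProd (hh.comp hm2)

open Classical in
/-- Concatenation of paths at time `r`. -/
def catP {X : Type*} [TopologicalSpace X] (r : ℝ≥0) (w w' : IPath X) : IPath X :=
  if h : w' 0 = w r then
    ⟨fun t => if t ≤ r then w t else w' (t - r), by
      refine Continuous.if_le w.continuous (w'.continuous.comp (by fun_prop))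
        continuous_id continuous_const ?_
      rintro t rfl
      simp [h]⟩
  else w

theorem catP_agree (r : ℝ≥0) (w w' : IPath X) : ∀ t ≤ r, w t = catP r w w' t := by
  intro t ht
  unfold catP
  split_ifs
  · simp [ht]
  · rfl

theorem catP_shift (r : ℝ≥0) (w w' : IPath X) (h : w' 0 = w r) (t : ℝ≥0) :
    catP r w w' (r + t) = w' t := by
  unfold catP
  rw [dif_pos h]
  rcases eq_or_ne t 0 with rfl | ht
  · simp [h]
  · simp [ht]

theorem catP_meas (hτ : Measurable τ) :
    Measurable fun p : IPath X × IPath X => catP (τ p.1) p.1 p.2 := by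
  classical
  refine measurable_path fun t => ?_
  have e : (fun p : IPath X × IPath X => catP (τ p.1) p.1 p.2 t) = fun p =>
      if p.2 0 = p.1 (τ p.1) then (if t ≤ τ p.1 then p.1 t else p.2 (t - τ p.1)) else p.1 t := by
    funext p
    unfold catP
    split_ifs <;> simp_all
  rw [e]
  have m1 : Measurable fun p : IPath X × IPath X => τ p.1 := hτ.comp measurable_fst
  refine Measurable.ite ?_ (Measurable.ite ?_ ?_ ?_) ?_
  · exact measurableSet_eq_fun ((measurable_ev 0).comp measurable_snd)
      (measurable_evf measurable_fst m1)
  · exact measurableSet_le measurable_const m1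
  · exact (measurable_ev t).comp measurable_fst
  · exact measurable_evf measurable_snd (measurable_const.sub m1)
  · exact (measurable_ev t).comp measurable_fst

theorem exists_cat (hτ : IsStopT τ) (P : ProbabilityMeasure (IPath X)) (hQ : QM τ Q)
    (h0 : ∀ w, (Q w : Measure (IPath X)) {w' : IPath X | w' 0 = piAt τ w} = 1) :
    ∃ R : ProbabilityMeasure (IPath X),
      (∀ A, MemFstopT τ A → (R : Measure (IPath X)) A = (P : Measure (IPath X)) A) ∧ RC R τ Q := by
  have hτm := stop_meas hτ
  have hc := catP_meas hτm
  have hθ := meas_shift hτm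
  let κ : Kernel (IPath X) (IPath X) := ⟨fun w => (Q w : Measure (IPath X)), hQ.meas⟩
  haveI : IsMarkovKernel κ := ⟨fun w => (Q w).2⟩
  let μ := (P : Measure (IPath X)) ⊗ₘ κ
  haveI hpr : IsProbabilityMeasure (μ.map fun p : IPath X × IPath X => catP (τ p.1) p.1 p.2) :=
    Measure.isProbabilityMeasure_map hc.aemeasurable
  have hmem : ∀ A, MemFstopT τ A → ∀ p : IPath X × IPath X,
      catP (τ p.1) p.1 p.2 ∈ A ↔ p.1 ∈ A := by
    intro A hA p
    have hag := catP_agree (τ p.1) p.1 p.2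
    have hi := ((memF_iff hτ _).1 hA).2
    refine ⟨hi _ _ fun t ht => (hag t (ht.trans (stop_eq hτ hag).le)).symm, hi _ _ hag⟩
  have hRA : ∀ A, MemFstopT τ A →
      (μ.map fun p : IPath X × IPath X => catP (τ p.1) p.1 p.2) A = (P : Measure (IPath X)) A := by
    intro A hA
    rw [Measure.map_apply hc hA.1]
    have : (fun p : IPath X × IPath X => catP (τ p.1) p.1 p.2) ⁻¹' A = A ×ˢ univ := by
      ext p
      simp only [mem_preimage, hmem A hA, mem_prod, mem_univ, and_true]
    rw [this, Measure.compProd_apply_prod hA.1 MeasurableSet.univ]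
    simp
  refine ⟨⟨_, hpr⟩, hRA, ?_⟩
  intro A hA B hB
  have hae : ∀ᵐ p ∂μ, p.2 0 = p.1 (τ p.1) := by
    have hms : MeasurableSet {p : IPath X × IPath X | p.2 0 = p.1 (τ p.1)} :=
      measurableSet_eq_fun ((measurable_ev 0).comp measurable_snd)
        (measurable_evf measurable_fst (hτm.comp measurable_fst))
    refine Measure.ae_compProd_of_ae_ae hms (Eventually.of_forall fun w => ?_)
    have : MeasurableSet {w' : IPath X | w' 0 = piAt τ w} :=
      (measurable_ev 0) (measurableSet_singleton _)
    exact (prob_compl_eq_zero_iff this).2 (h0 w)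
  have hg : Measurable fun w => A.indicator (fun w => (Q w : Measure (IPath X)) B) w :=
    ((Measure.measurable_coe hB).comp hQ.meas).indicator hA.1
  change (μ.map fun p : IPath X × IPath X => catP (τ p.1) p.1 p.2) (A ∩ shiftAt τ ⁻¹' B) =
    ∫⁻ w in A, (Q w : Measure (IPath X)) B
      ∂(μ.map fun p : IPath X × IPath X => catP (τ p.1) p.1 p.2)
  rw [← lintegral_indicator hA.1, lint_eq hτ hRA hg, lintegral_indicator hA.1,
    Measure.map_apply hc (hA.1.inter (hθ hB))]
  · have e : (P : Measure (IPath X)) ⊗ₘ κ = μ := rfl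
    rw [show ∫⁻ w in A, (Q w : Measure (IPath X)) B ∂(P : Measure (IPath X)) = μ (A ×ˢ B) from
      (Measure.compProd_apply_prod (μ := (P : Measure (IPath X))) (κ := κ) hA.1 hB).symm]
    refine measure_congr ?_
    filter_upwards [hae] with p hp
    have hag := catP_agree (τ p.1) p.1 p.2
    have hsh : shiftAt τ (catP (τ p.1) p.1 p.2) = p.2 := by
      ext t
      change catP (τ p.1) p.1 p.2 (τ (catP (τ p.1) p.1 p.2) + t) = _
      rw [stop_eq hτ hag]
      exact catP_shift _ _ _ hp t
    refine propext ?_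
    change (catP (τ p.1) p.1 p.2 ∈ A ∧ shiftAt τ (catP (τ p.1) p.1 p.2) ∈ B) ↔ (p.1 ∈ A ∧ p.2 ∈ B)
    rw [hmem A hA, hsh]
  · intro w w' h
    have hi := ((memF_iff hτ _).1 hA).2
    have : w' ∈ A ↔ w ∈ A :=
      ⟨hi _ _ fun t ht => (h t (ht.trans (stop_eq hτ h).le)).symm, hi _ _ h⟩
    by_cases hw : w ∈ A
    · rw [indicator_of_mem hw, indicator_of_mem (this.2 hw), hQ.inv hτ h]
    · rw [indicator_of_notMem hw, indicator_of_notMem (fun h => hw (this.1 h))]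

end RCDsec

section SelSec

open Filter Topology ENNReal BoundedContinuousFunction

/-- Maximizers of `φ` on `S`. -/
def amax {M : Type*} (φ : M → ℝ≥0∞) (S : Set M) : Set M := {P | P ∈ S ∧ ∀ P' ∈ S, φ P' ≤ φ P}

/-- Measurable compact-valued nonempty correspondence. -/
structure CC {X M : Type*} [MeasurableSpace X] [TopologicalSpace M] (C : X → Set M) : Prop where
  ne : ∀ x, (C x).Nonempty
  cpt : ∀ x, IsCompact (C x)
  meas : ∀ K : Set M, IsClosed K → MeasurableSet {x | (C x ∩ K).Nonempty}

theorem amax_CC {X M : Type*} [MeasurableSpace X] [TopologicalSpace M] [T2Space M]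
    {C : X → Set M} (hC : CC C) {φ : M → ℝ≥0∞} (hφ : Continuous φ) :
    CC fun x => amax φ (C x) := by
  have hcl : ∀ q : ℝ≥0∞, IsClosed {P | q ≤ φ P} := fun q => isClosed_le continuous_const hφ
  refine ⟨fun x => ?_, fun x => ?_, fun K hK => ?_⟩
  · obtain ⟨P, hP, hm⟩ := (hC.cpt x).exists_isMaxOn (hC.ne x) hφ.continuousOn
    exact ⟨P, hP, fun P' hP' => hm hP'⟩
  · have : amax φ (C x) = C x ∩ ⋂ P' ∈ C x, {P | φ P' ≤ φ P} := by
      ext P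
      simp [amax]
    rw [this]
    exact (hC.cpt x).inter_right (isClosed_biInter fun P' _ => hcl _)
  · have : {x | (amax φ (C x) ∩ K).Nonempty} = ⋂ q : ℚ,
        ({x | (C x ∩ {P | ((q : ℝ).toNNReal : ℝ≥0∞) ≤ φ P}).Nonempty}ᶜ ∪
          {x | (C x ∩ (K ∩ {P | ((q : ℝ).toNNReal : ℝ≥0∞) ≤ φ P})).Nonempty}) := by
      ext x
      simp only [mem_ofPred_eq, mem_iInter, mem_union, mem_compl_iff]
      constructor
      · rintro ⟨P, ⟨hP, hm⟩, hPK⟩ q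
        by_cases h : (C x ∩ {P | ((q : ℝ).toNNReal : ℝ≥0∞) ≤ φ P}).Nonempty
        · right
          obtain ⟨P', hP', hq⟩ := h
          exact ⟨P, hP, hPK, le_trans (mem_ofPred.1 hq) (hm P' hP')⟩
        · exact Or.inl h
      · intro h
        have hne : (C x ∩ K).Nonempty := by
          rcases h 0 with h0 | ⟨P, hP, hK, _⟩
          · obtain ⟨P, hP⟩ := hC.ne x
            exact absurd ⟨P, hP, by simp⟩ h0
          · exact ⟨P, hP, hK⟩
        obtain ⟨P, ⟨hP, hPK⟩, hm⟩ := ((hC.cpt x).inter_right hK).exists_isMaxOn hne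
          hφ.continuousOn
        refine ⟨P, ⟨hP, fun P' hP' => ?_⟩, hPK⟩
        by_contra hlt
        rw [not_le] at hlt
        obtain ⟨q, -, hq1, hq2⟩ := ENNReal.lt_iff_exists_rat_btwn.1 hlt
        rcases h q with h0 | ⟨R, hR, hRK, hRq⟩
        · exact h0 ⟨P', hP', mem_ofPred.2 hq2.le⟩
        · exact absurd (hm ⟨hR, hRK⟩) (not_le.2 (hq1.trans_le hRq))
    rw [this]
    exact MeasurableSet.iInter fun q => (hC.meas _ (hcl _)).compl.union
      (hC.meas _ (hK.inter (hcl _)))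

theorem inter_CC {X M : Type*} [MeasurableSpace X] [TopologicalSpace M] [T2Space M]
    {C : ℕ → X → Set M} (hC : ∀ n, CC (C n)) (hanti : ∀ n x, C (n + 1) x ⊆ C n x) :
    CC fun x => ⋂ n, C n x := by
  have key : ∀ (K : Set M), IsClosed K → ∀ x, (∀ n, (C n x ∩ K).Nonempty) →
      ((⋂ n, C n x) ∩ K).Nonempty := by
    intro K hK x h
    rw [iInter_inter]
    refine IsCompact.nonempty_iInter_of_sequence_nonempty_isCompact_isClosed _
      (fun n => inter_subset_inter_left _ (hanti n x)) h (((hC 0).cpt x).inter_right hK)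
      (fun n => ((hC n).cpt x).isClosed.inter hK)
  refine ⟨fun x => ?_, fun x => ?_, fun K hK => ?_⟩
  · simpa using key univ isClosed_univ x (fun n => by simpa using (hC n).ne x)
  · exact ((hC 0).cpt x).of_isClosed_subset (isClosed_iInter fun n => ((hC n).cpt x).isClosed)
      (iInter_subset _ 0)
  · have : {x | ((⋂ n, C n x) ∩ K).Nonempty} = ⋂ n, {x | (C n x ∩ K).Nonempty} := by
      ext x
      simp only [mem_ofPred_eq, mem_iInter]
      exact ⟨fun h n => h.mono (inter_subset_inter_left _ (iInter_subset _ n)), key K hK x⟩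
    rw [this]
    exact MeasurableSet.iInter fun n => (hC n).meas K hK

/-- Iterated maximization. -/
def itC {X M : Type*} (φ : ℕ → M → ℝ≥0∞) (C : X → Set M) : ℕ → X → Set M
  | 0 => C
  | n + 1 => fun x => amax (φ n) (itC φ C n x)

theorem itC_CC {X M : Type*} [MeasurableSpace X] [TopologicalSpace M] [T2Space M]
    {C : X → Set M} (hC : CC C) {φ : ℕ → M → ℝ≥0∞} (hφ : ∀ n, Continuous (φ n)) :
    ∀ n, CC (itC φ C n)
  | 0 => hC
  | n + 1 => amax_CC (itC_CC hC hφ n) (hφ n)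

theorem itC_eq {X M : Type*} {C : X → Set M} {φ : ℕ → M → ℝ≥0∞} {x : X} {P P' : M}
    (hP : P ∈ ⋂ n, itC φ C n x) (hP' : P' ∈ ⋂ n, itC φ C n x) (n : ℕ) : φ n P = φ n P' := by
  rw [mem_iInter] at hP hP'
  exact le_antisymm ((hP' (n + 1)).2 _ (hP n)) ((hP (n + 1)).2 _ (hP' n))

/-- A countable separating family of bounded continuous functions. -/
theorem exists_sep (Y : Type*) [TopologicalSpace Y] [SecondCountableTopology Y]
    [HasOuterApproxClosed Y] [MeasurableSpace Y] [BorelSpace Y] :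
    ∃ g : ℕ → (Y →ᵇ ℝ≥0), ∀ μ ν : Measure Y, IsProbabilityMeasure μ → IsProbabilityMeasure ν →
      (∀ n, ∫⁻ y, g n y ∂μ = ∫⁻ y, g n y ∂ν) → μ = ν := by
  obtain ⟨b, hbc, -, hb⟩ := TopologicalSpace.exists_countable_basis Y
  have hbne : (insert univ b).Nonempty := ⟨univ, mem_insert _ _⟩
  obtain ⟨u, hu⟩ := (hbc.insert univ).exists_eq_range hbne
  have huo : ∀ n, IsOpen (u n) := by
    intro n
    have : u n ∈ insert univ b := hu ▸ mem_range_self n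
    rcases this with h | h
    · rw [h]; exact isOpen_univ
    · exact hb.isOpen h
  let V : Finset ℕ → Set Y := fun s => ⋂ i ∈ s, u i
  have hV : ∀ s, IsOpen (V s) := fun s => isOpen_biInter_finset fun i _ => huo i
  have hF : ∀ s, IsClosed (V s)ᶜ := fun s => (hV s).isClosed_compl
  obtain ⟨e, he⟩ := exists_surjective_nat (Finset ℕ × ℕ)
  let G : Finset ℕ × ℕ → (Y →ᵇ ℝ≥0) := fun p => (hF p.1).apprSeq p.2
  refine ⟨fun n => G (e n), fun μ ν hμ hν h => ?_⟩
  have h1 : ∀ s, μ (V s) = ν (V s) := by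
    intro s
    have h2 : μ (V s)ᶜ = ν (V s)ᶜ := by
      have o1 := HasOuterApproxClosed.tendsto_lintegral_apprSeq (hF s) μ
      have o2 := HasOuterApproxClosed.tendsto_lintegral_apprSeq (hF s) ν
      refine tendsto_nhds_unique o1 (o2.congr fun n => ?_)
      obtain ⟨k, hk⟩ := he (s, n)
      have : ∫⁻ y, G (e k) y ∂μ = ∫⁻ y, G (e k) y ∂ν := h k
      rw [hk] at this
      exact this.symm
    have := prob_compl_eq_one_sub (μ := μ) (hF s).measurableSet
    have h3 := prob_compl_eq_one_sub (μ := ν) (hF s).measurableSet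
    rw [compl_compl] at this h3
    rw [this, h3, h2]
  have hgen : ‹MeasurableSpace Y› = MeasurableSpace.generateFrom (range V) := by
    refine le_antisymm ?_ ?_
    · rw [BorelSpace.measurable_eq (α := Y), hb.borel_eq_generateFrom]
      refine MeasurableSpace.generateFrom_le fun t ht => ?_
      have : t ∈ range u := hu ▸ mem_insert_of_mem _ ht
      obtain ⟨n, rfl⟩ := this
      exact MeasurableSpace.measurableSet_generateFrom ⟨{n}, by simp [V]⟩
    · refine MeasurableSpace.generateFrom_le ?_
      rintro _ ⟨s, rfl⟩
      exact (hV s).measurableSet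
  refine ext_of_generate_finite (range V) hgen ?_ ?_ (by simp)
  · rintro _ ⟨s, rfl⟩ _ ⟨t, rfl⟩ -
    classical
    refine ⟨s ∪ t, ?_⟩
    ext y
    simp only [V, mem_iInter, Finset.mem_union, mem_inter_iff, or_imp, forall_and]
  · rintro _ ⟨s, rfl⟩
    exact h1 s

theorem exists_sel {X Y : Type*} [MeasurableSpace X] [TopologicalSpace Y]
    [SecondCountableTopology Y] [HasOuterApproxClosed Y] [MeasurableSpace Y] [BorelSpace Y]
    {C : X → Set (ProbabilityMeasure Y)} (hC : CC C) :
    ∃ sel : X → ProbabilityMeasure Y,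
      (∀ U : Set (ProbabilityMeasure Y), IsOpen U → MeasurableSet (sel ⁻¹' U)) ∧
      ∀ x, sel x ∈ C x := by
  obtain ⟨g, hg⟩ := exists_sep Y
  let φ : ℕ → ProbabilityMeasure Y → ℝ≥0∞ := fun n P => ∫⁻ y, g n y ∂(P : Measure Y)
  have hφ : ∀ n, Continuous (φ n) := fun n =>
    ProbabilityMeasure.continuous_lintegral_boundedContinuousFunction (g n)
  have hD := inter_CC (itC_CC hC hφ) (fun n x P hP => hP.1)
  choose sel hsel using hD.ne
  have huniq : ∀ x P, P ∈ ⋂ n, itC φ C n x → P = sel x := by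
    intro x P hP
    apply Subtype.ext
    exact hg _ _ P.2 (sel x).2 (fun n => itC_eq hP (hsel x) n)
  refine ⟨sel, fun U hU => ?_, fun x => mem_iInter.1 (hsel x) 0⟩
  have h1 := hD.meas Uᶜ hU.isClosed_compl
  have : sel ⁻¹' U = {x | ((⋂ n, itC φ C n x) ∩ Uᶜ).Nonempty}ᶜ := by
    ext x
    simp only [mem_preimage, mem_compl_iff, mem_ofPred_eq]
    constructor
    · rintro h ⟨P, hP, hPU⟩
      rw [huniq x P hP] at hPU
      exact hPU h
    · intro h
      by_contra hn
      exact h ⟨sel x, hsel x, hn⟩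
  rw [this]
  exact h1.compl

end SelSec

section StepSec

open Filter Topology ENNReal BoundedContinuousFunction

variable {X : Type*} [TopologicalSpace X] [PolishSpace X] [MeasurableSpace X] [BorelSpace X]

/-- Functionals which decompose along time shifts. -/
structure Dec (G : IPath X →ᵇ ℝ≥0) (H : ℝ≥0 → IPath X → ℝ≥0∞) (c : ℝ≥0 → ℝ≥0∞) : Prop where
  mH : Measurable fun p : ℝ≥0 × IPath X => H p.1 p.2
  mc : Measurable c
  c0 : ∀ r, c r ≠ 0
  ct : ∀ r, c r ≠ ∞
  inv : ∀ r (w w' : IPath X), (∀ t ≤ r, w t = w' t) → H r w' = H r w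
  eq : ∀ r (w w' : IPath X), (∀ t, w' t = w (r + t)) → (G w : ℝ≥0∞) = H r w + c r * G w'

/-- The expectation functional. -/
def Ex (G : IPath X →ᵇ ℝ≥0) (P : ProbabilityMeasure (IPath X)) : ℝ≥0∞ :=
  ∫⁻ w, G w ∂(P : Measure (IPath X))

theorem Ex_cont (G : IPath X →ᵇ ℝ≥0) : Continuous (Ex G) :=
  ProbabilityMeasure.continuous_lintegral_boundedContinuousFunction G

theorem Ex_fin (G : IPath X →ᵇ ℝ≥0) (P : ProbabilityMeasure (IPath X)) : Ex G P ≠ ∞ :=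
  (BoundedContinuousFunction.lintegral_lt_top_of_nnreal _ G).ne

theorem meas_G (G : IPath X →ᵇ ℝ≥0) : Measurable fun w => (G w : ℝ≥0∞) :=
  (ENNReal.continuous_coe.comp G.continuous).measurable

variable {τ : IPath X → ℝ≥0} {Q : IPath X → ProbabilityMeasure (IPath X)}
  {G : IPath X →ᵇ ℝ≥0} {H : ℝ≥0 → IPath X → ℝ≥0∞} {c : ℝ≥0 → ℝ≥0∞}

theorem Dec.mHτ (hD : Dec G H c) (hτ : IsStopT τ) : Measurable fun w => H (τ w) w :=
  hD.mH.comp ((stop_meas hτ).prodMk measurable_id)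

theorem Ex_meas (G : IPath X →ᵇ ℝ≥0) (hQ : QM τ Q) : Measurable fun w => Ex G (Q w) :=
  (Measure.measurable_lintegral (meas_G G)).comp hQ.meas

theorem Dec.formula (hD : Dec G H c) (hτ : IsStopT τ) {P : ProbabilityMeasure (IPath X)}
    (hQ : QM τ Q) (hR : RC P τ Q) :
    Ex G P = ∫⁻ w, H (τ w) w ∂(P : Measure (IPath X)) +
      ∫⁻ w, c (τ w) * Ex G (Q w) ∂(P : Measure (IPath X)) := by
  have h1 : Ex G P = ∫⁻ w, (H (τ w) w + c (τ w) * G (shiftAt τ w)) ∂(P : Measure (IPath X)) :=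
    lintegral_congr fun w => hD.eq _ _ _ fun t => rfl
  rw [h1, lintegral_add_left (hD.mHτ hτ)]
  congr 1
  have hm : Measurable fun p : IPath X × IPath X => c (τ p.1) * (G p.2 : ℝ≥0∞) :=
    (hD.mc.comp ((stop_meas hτ).comp measurable_fst)).mul ((meas_G G).comp measurable_snd)
  have h2 := rc_lintegral hτ hQ hR hm
  simp only [stop_stop hτ] at h2
  rw [h2]
  exact lintegral_congr fun w => lintegral_const_mul _ (meas_G G)

/-- The inductive property. -/
structure Good (C0 C : X → Set (ProbabilityMeasure (IPath X))) : Prop where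
  sub : ∀ x, C x ⊆ C0 x
  cc : CC C
  mp1 : ∀ x, ∀ P ∈ C x, ∀ τ : IPath X → ℝ≥0, IsStopT τ →
    ∀ Q : IPath X → ProbabilityMeasure (IPath X), QM τ Q →
      (∀ᵐ w ∂(P : Measure (IPath X)), Q w ∈ C0 (piAt τ w)) → RC P τ Q →
      (∀ᵐ w ∂(P : Measure (IPath X)), Q w ∈ C (piAt τ w))
  mp2 : ∀ x, ∀ P ∈ C x, ∀ τ : IPath X → ℝ≥0, IsStopT τ →
    ∀ Q : IPath X → ProbabilityMeasure (IPath X), QM τ Q → (∀ w, Q w ∈ C (piAt τ w)) →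
      ∀ R : ProbabilityMeasure (IPath X),
        (∀ A, MemFstopT τ A → (R : Measure (IPath X)) A = (P : Measure (IPath X)) A) →
        RC R τ Q → R ∈ C x

theorem Good.step {C0 C : X → Set (ProbabilityMeasure (IPath X))}
    (hC3 : ∀ x, ∀ P ∈ C0 x, (P : Measure (IPath X)) {w : IPath X | w 0 = x} = 1)
    (hMP1 : ∀ x, ∀ P ∈ C0 x, ∀ τ : IPath X → ℝ≥0, IsStopT τ →
      ∃ Q : IPath X → ProbabilityMeasure (IPath X), QM τ Q ∧
        (∀ᵐ w ∂(P : Measure (IPath X)), Q w ∈ C0 (piAt τ w)) ∧ RC P τ Q)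
    (hg : Good C0 C) (hD : Dec G H c) : Good C0 (fun x => amax (Ex G) (C x)) := by
  have hcc := amax_CC hg.cc (Ex_cont G)
  -- comparison of a measure `P` with a concatenation `R`
  have hF : ∀ (P R : ProbabilityMeasure (IPath X)) (τ : IPath X → ℝ≥0), IsStopT τ →
      ∀ Q' : IPath X → ProbabilityMeasure (IPath X), QM τ Q' →
      (∀ A, MemFstopT τ A → (R : Measure (IPath X)) A = (P : Measure (IPath X)) A) → RC R τ Q' →
      Ex G R = ∫⁻ w, H (τ w) w ∂(P : Measure (IPath X)) +
        ∫⁻ w, c (τ w) * Ex G (Q' w) ∂(P : Measure (IPath X)) := by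
    intro P R τ hτ Q' hQ' hA hR
    rw [hD.formula hτ hQ' hR, lint_eq hτ hA (hD.mHτ hτ),
      lint_eq hτ hA (g := fun w => c (τ w) * Ex G (Q' w))
        ((hD.mc.comp (stop_meas hτ)).mul (Ex_meas G hQ'))]
    · intro w w' h
      rw [stop_eq hτ h, hQ'.inv hτ h]
    · intro w w' h
      rw [stop_eq hτ h]
      exact hD.inv _ _ _ h
  refine ⟨fun x P hP => hg.sub x hP.1, hcc, ?_, ?_⟩
  · intro x P hP τ hτ Q hQ hQ0 hR
    have hQC := hg.mp1 x P hP.1 τ hτ Q hQ hQ0 hR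
    obtain ⟨sel, hsm, hs⟩ := exists_sel hcc
    have hpi := meas_pi (stop_meas hτ)
    have hinv : ∀ w w' : IPath X, (∀ t ≤ τ w, w t = w' t) →
        (fun w => sel (piAt τ w)) w' = (fun w => sel (piAt τ w)) w := by
      intro w w' h
      simp only [piAt]
      rw [stop_eq hτ h, h _ le_rfl]
    have hQ' : QM τ (fun w => sel (piAt τ w)) := QM.of hτ (fun U hU => hpi (hsm U hU)) hinv
    obtain ⟨R, hRA, hRR⟩ := exists_cat hτ P hQ' (fun w => hC3 _ _ (hg.sub _ (hs _).1))
    have hRC : R ∈ C x := hg.mp2 x P hP.1 τ hτ _ hQ' (fun w => (hs _).1) R hRA hRR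
    have hle := hP.2 R hRC
    have e1 := hF P R τ hτ _ hQ' hRA hRR
    have e2 := hD.formula hτ hQ hR
    have hfin := Ex_fin G P
    rw [e1, e2] at hle
    rw [e2] at hfin
    have hle' := (ENNReal.add_le_add_iff_left (ENNReal.add_ne_top.1 hfin).1).1 hle
    have hae : (fun w => c (τ w) * Ex G (Q w)) ≤ᵐ[(P : Measure (IPath X))]
        fun w => c (τ w) * Ex G (sel (piAt τ w)) := by
      filter_upwards [hQC] with w hw
      exact mul_le_mul_right ((hs (piAt τ w)).2 _ hw) _
    have heq := ae_eq_of_ae_le_of_lintegral_le hae (ENNReal.add_ne_top.1 hfin).2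
      ((hD.mc.comp (stop_meas hτ)).mul (Ex_meas G hQ')).aemeasurable hle'
    filter_upwards [heq, hQC] with w hw hwC
    have h3 : Ex G (Q w) = Ex G (sel (piAt τ w)) :=
      (ENNReal.mul_right_inj (hD.c0 _) (hD.ct _)).1 hw
    exact ⟨hwC, fun P' hP' => h3 ▸ (hs (piAt τ w)).2 P' hP'⟩
  · intro x P hP τ hτ Q hQ hQC R hRA hRR
    have hRC : R ∈ C x := hg.mp2 x P hP.1 τ hτ Q hQ (fun w => (hQC w).1) R hRA hRR
    refine ⟨hRC, fun P' hP' => (hP.2 P' hP').trans ?_⟩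
    obtain ⟨Q₁, hQ₁, hQ₁0, hR₁⟩ := hMP1 x P (hg.sub x hP.1) τ hτ
    have hQ₁C := hg.mp1 x P hP.1 τ hτ Q₁ hQ₁ hQ₁0 hR₁
    rw [hD.formula hτ hQ₁ hR₁, hF P R τ hτ Q hQ hRA hRR]
    refine add_le_add le_rfl (lintegral_mono_ae ?_)
    filter_upwards [hQ₁C] with w hw
    exact mul_le_mul_right ((hQC w).2 _ hw) _

end StepSec

section LaplaceSec

open Filter Topology ENNReal BoundedContinuousFunction

variable {X : Type*} [TopologicalSpace X] [PolishSpace X] [MeasurableSpace X] [BorelSpace X]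

/-- integrand -/
def kI (f : X →ᵇ ℝ≥0) (n : ℕ) (w : IPath X) (t : ℝ) : ℝ :=
  Real.exp (-((n : ℝ) + 1) * t) * (f (w t.toNNReal) : ℝ)

theorem kI_nonneg (f : X →ᵇ ℝ≥0) (n : ℕ) (w : IPath X) (t : ℝ) : 0 ≤ kI f n w t := by
  unfold kI; positivity

theorem exists_bd (f : X →ᵇ ℝ≥0) : ∃ M : ℝ≥0, ∀ x, f x ≤ M := by
  refine ⟨nndist f 0, fun x => ?_⟩
  have := BoundedContinuousFunction.nndist_coe_le_nndist (f := f) (g := 0) x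
  simpa [nndist_comm, NNReal.nndist_zero_eq_val] using this

theorem kI_cont (f : X →ᵇ ℝ≥0) (n : ℕ) :
    Continuous fun p : C(ℝ≥0, X) × ℝ => kI f n p.1 p.2 := by
  unfold kI
  have h1 : Continuous fun p : C(ℝ≥0, X) × ℝ => p.1 (p.2.toNNReal) := by fun_prop
  have h2 : Continuous fun p : C(ℝ≥0, X) × ℝ => ((f (p.1 (p.2.toNNReal)) : ℝ≥0) : ℝ) :=
    NNReal.continuous_coe.comp (f.continuous.comp h1)
  exact (by fun_prop : Continuous fun p : C(ℝ≥0, X) × ℝ =>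
    Real.exp (-((n : ℝ) + 1) * p.2)).mul h2

theorem kI_cont_t (f : X →ᵇ ℝ≥0) (n : ℕ) (w : IPath X) : Continuous (kI f n w) :=
  (kI_cont f n).comp (by fun_prop : Continuous fun t : ℝ => (w, t))

theorem exp_int (n : ℕ) : IntegrableOn (fun t : ℝ => Real.exp (-((n : ℝ) + 1) * t)) (Ioi 0) :=
  exp_neg_integrableOn_Ioi 0 (by positivity)

theorem kI_le {f : X →ᵇ ℝ≥0} {M : ℝ≥0} (hM : ∀ x, f x ≤ M) (n : ℕ) (w : IPath X) (t : ℝ) :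
    ‖kI f n w t‖ ≤ Real.exp (-((n : ℝ) + 1) * t) * M := by
  rw [Real.norm_of_nonneg (kI_nonneg _ _ _ _)]
  exact mul_le_mul_of_nonneg_left (by exact_mod_cast hM _) (Real.exp_pos _).le

theorem kI_int (f : X →ᵇ ℝ≥0) (n : ℕ) (w : IPath X) : IntegrableOn (kI f n w) (Ioi 0) := by
  obtain ⟨M, hM⟩ := exists_bd f
  exact Integrable.mono' ((exp_int n).mul_const (M : ℝ))
    (kI_cont_t f n w).aestronglyMeasurable (Eventually.of_forall fun t => kI_le hM n w t)

theorem gI_cont (f : X →ᵇ ℝ≥0) (n : ℕ) :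
    Continuous fun w : C(ℝ≥0, X) => (∫ t in Ioi (0 : ℝ), kI f n w t) := by
  obtain ⟨M, hM⟩ := exists_bd f
  refine continuous_of_dominated (bound := fun t => Real.exp (-((n : ℝ) + 1) * t) * M)
    (fun w => (kI_cont_t f n w).aestronglyMeasurable)
    (fun w => Eventually.of_forall fun t => kI_le hM n w t) ((exp_int n).mul_const (M : ℝ)) ?_
  exact Eventually.of_forall fun t =>
    (kI_cont f n).comp (by fun_prop : Continuous fun w : C(ℝ≥0, X) => (w, t))

theorem exists_G (f : X →ᵇ ℝ≥0) (n : ℕ) : ∃ G : IPath X →ᵇ ℝ≥0,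
    ∀ w, (G w : ℝ≥0∞) = ∫⁻ t in Ioi (0 : ℝ), ENNReal.ofReal (kI f n w t) := by
  obtain ⟨M, hM⟩ := exists_bd f
  set B : ℝ := ∫ t in Ioi (0 : ℝ), Real.exp (-((n : ℝ) + 1) * t) * M with hB
  have hle : ∀ w : IPath X, (∫ t in Ioi (0 : ℝ), kI f n w t) ≤ B := fun w =>
    integral_mono (kI_int f n w) ((exp_int n).mul_const (M : ℝ))
      (fun t => (le_abs_self _).trans (kI_le hM n w t))
  have h0 : ∀ w : IPath X, 0 ≤ ∫ t in Ioi (0 : ℝ), kI f n w t := fun w =>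
    integral_nonneg fun t => kI_nonneg f n w t
  refine ⟨BoundedContinuousFunction.mkOfBound
    ⟨fun w => Real.toNNReal (∫ t in Ioi (0 : ℝ), kI f n w t),
      continuous_real_toNNReal.comp (gI_cont f n)⟩ B ?_, ?_⟩
  · intro w w'
    simp only [ContinuousMap.coe_mk]
    rw [NNReal.dist_eq, Real.coe_toNNReal _ (h0 w), Real.coe_toNNReal _ (h0 w')]
    exact abs_sub_le_of_nonneg_of_le (h0 w) (hle w) (h0 w') (hle w')
  · intro w
    rw [← ofReal_integral_eq_lintegral_ofReal (kI_int f n w)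
      (Eventually.of_forall fun t => kI_nonneg f n w t)]
    rfl

/-- The resolvent functional. -/
def GI (f : X →ᵇ ℝ≥0) (n : ℕ) : IPath X →ᵇ ℝ≥0 := (exists_G f n).choose

theorem GI_eq (f : X →ᵇ ℝ≥0) (n : ℕ) (w : IPath X) :
    (GI f n w : ℝ≥0∞) = ∫⁻ t in Ioi (0 : ℝ), ENNReal.ofReal (kI f n w t) :=
  (exists_G f n).choose_spec w

theorem kI_meas (f : X →ᵇ ℝ≥0) (n : ℕ) :
    Measurable fun p : IPath X × ℝ => ENNReal.ofReal (kI f n p.1 p.2) :=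
  (kI_cont f n).measurable.ennreal_ofReal

theorem GI_dec (f : X →ᵇ ℝ≥0) (n : ℕ) :
    Dec (GI f n) (fun r w => ∫⁻ t in Ioc (0 : ℝ) r, ENNReal.ofReal (kI f n w t))
      (fun r => ENNReal.ofReal (Real.exp (-((n : ℝ) + 1) * r))) where
  mH := by
    have hs : MeasurableSet {q : (ℝ≥0 × IPath X) × ℝ | 0 < q.2 ∧ q.2 ≤ (q.1.1 : ℝ)} := by
      refine (measurableSet_lt measurable_const measurable_snd).inter
        (measurableSet_le measurable_snd ?_)
      exact measurable_coe_nnreal_real.comp (measurable_fst.comp measurable_fst)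
    have hm : Measurable ({q : (ℝ≥0 × IPath X) × ℝ | 0 < q.2 ∧ q.2 ≤ (q.1.1 : ℝ)}.indicator
        fun q => ENNReal.ofReal (kI f n q.1.2 q.2)) := by
      refine Measurable.indicator ?_ hs
      exact (kI_meas f n).comp
        ((measurable_snd.comp measurable_fst).prodMk measurable_snd)
    have h2 := hm.lintegral_prod_right' (ν := (volume : Measure ℝ))
    convert h2 using 2 with p
    rw [← lintegral_indicator measurableSet_Ioc]
    rfl
  mc := by fun_prop
  c0 := fun r => by simp [Real.exp_pos]
  ct := fun r => ENNReal.ofReal_ne_top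
  inv := fun r w w' h => by
    refine setLIntegral_congr_fun measurableSet_Ioc fun t ht => ?_
    have : t.toNNReal ≤ r := Real.toNNReal_le_iff_le_coe.2 ht.2
    simp only [kI, h _ this]
  eq := fun r w w' h => by
    have hs : ∫⁻ t in Ioi (0 : ℝ), ENNReal.ofReal (kI f n w t) =
        (∫⁻ t in Ioc (0 : ℝ) r, ENNReal.ofReal (kI f n w t)) +
          ∫⁻ t in Ioi (r : ℝ), ENNReal.ofReal (kI f n w t) := by
      rw [← Ioc_union_Ioi_eq_Ioi (a := (0 : ℝ)) (b := r) r.2,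
        lintegral_union measurableSet_Ioi (Ioc_disjoint_Ioi le_rfl)]
    have hm : Measurable fun t : ℝ => ENNReal.ofReal (kI f n w' t) :=
      (kI_cont_t f n w').measurable.ennreal_ofReal
    rw [GI_eq, GI_eq, hs]
    congr 1
    rw [← lintegral_const_mul _ hm,
      ← lintegral_indicator measurableSet_Ioi, ← lintegral_indicator measurableSet_Ioi,
      ← lintegral_add_left_eq_self _ (r : ℝ)]
    refine lintegral_congr fun t => ?_
    by_cases ht : 0 < t
    · rw [indicator_of_mem (by simpa using ht), indicator_of_mem (by simpa using ht),
        ← ENNReal.ofReal_mul (Real.exp_pos _).le]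
      congr 1
      simp only [kI, h]
      rw [← mul_assoc, ← Real.exp_add, Real.toNNReal_add r.coe_nonneg ht.le, Real.toNNReal_coe]
      ring_nf
    · rw [indicator_of_notMem (by simpa using ht), indicator_of_notMem (by simpa using ht)]

/-- Uniqueness for Laplace transforms of finite measures on the half-line. -/
theorem laplace_unique {μ ν : Measure ℝ≥0} [IsFiniteMeasure μ] [IsFiniteMeasure ν]
    (h : ∀ n : ℕ, ∫ t, Real.exp (-(t : ℝ)) ^ n ∂μ = ∫ t, Real.exp (-(t : ℝ)) ^ n ∂ν) : μ = ν := by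
  let b : ℝ≥0 →ᵇ ℝ := BoundedContinuousFunction.ofNormedAddCommGroup
    (fun t : ℝ≥0 => Real.exp (-(t : ℝ))) (by fun_prop) 1 (fun t => by
      rw [Real.norm_of_nonneg (Real.exp_pos _).le]
      simp)
  let A : StarSubalgebra ℝ (ℝ≥0 →ᵇ ℝ) :=
    { Algebra.adjoin ℝ {b} with
      star_mem' := by
        intro a ha
        have : star a = a := by ext t; simp
        rw [this]; exact ha }
  refine ext_of_forall_mem_subalgebra_integral_eq_of_polish (𝕜 := ℝ) (A := A) ?_ ?_
  · intro s t hst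
    refine ⟨b, ⟨_, ⟨b, Algebra.subset_adjoin (mem_singleton b), rfl⟩, rfl⟩, ?_⟩
    intro hb
    apply hst
    have : Real.exp (-(s : ℝ)) = Real.exp (-(t : ℝ)) := hb
    simpa using this
  · intro g hg
    have hg' : g ∈ Algebra.adjoin ℝ {b} := hg
    rw [Algebra.adjoin_singleton_eq_range_aeval] at hg'
    obtain ⟨p, rfl⟩ := hg'
    have key : ∀ (m : Measure ℝ≥0) [IsFiniteMeasure m],
        ∫ t, (Polynomial.aeval b p) t ∂m =
          p.sum fun n c => c * ∫ t, Real.exp (-(t : ℝ)) ^ n ∂m := by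
      intro m _
      have e : ∀ t : ℝ≥0, (Polynomial.aeval b p) t =
          ∑ n ∈ p.support, p.coeff n * Real.exp (-(t : ℝ)) ^ n := by
        intro t
        rw [Polynomial.aeval_eq_sum_range' (Nat.lt_succ_self _)]
        rw [BoundedContinuousFunction.coe_sum, Finset.sum_apply]
        symm
        refine Finset.sum_subset_zero_on_sdiff ?_ ?_ ?_
        · intro n hn
          exact Finset.mem_range.2 (Nat.lt_succ_of_le (Polynomial.le_natDegree_of_mem_supp n hn))
        · intro n hn
          have : p.coeff n = 0 := by simpa using (Finset.mem_sdiff.1 hn).2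
          simp [this]
        · intro n _
          rfl
      simp_rw [e]
      rw [integral_finsetSum]
      · simp only [integral_const_mul]
        rfl
      · intro n _
        refine Integrable.const_mul ?_ _
        exact (b ^ n).integrable m
    change ∫ x, (Polynomial.aeval b p) x ∂μ = ∫ x, (Polynomial.aeval b p) x ∂ν
    rw [key μ, key ν]
    simp only [h]

end LaplaceSec


section MargSec

open Filter Topology ENNReal BoundedContinuousFunction

variable {X : Type*} [TopologicalSpace X] [PolishSpace X] [MeasurableSpace X] [BorelSpace X]

/-- The marginal expectation -/
def pM (f : X →ᵇ ℝ≥0) (P : ProbabilityMeasure (IPath X)) (t : ℝ) : ℝ≥0∞ :=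
  ∫⁻ w, (f (w t.toNNReal) : ℝ≥0∞) ∂(P : Measure (IPath X))

theorem pM_cont (f : X →ᵇ ℝ≥0) (P : ProbabilityMeasure (IPath X)) : Continuous (pM f P) := by
  obtain ⟨M, hM⟩ := exists_bd f
  rw [continuous_iff_continuousAt]
  intro t
  refine tendsto_lintegral_filter_of_dominated_convergence (fun _ => (M : ℝ≥0∞)) ?_ ?_ ?_ ?_
  · exact Eventually.of_forall fun s => (ENNReal.continuous_coe.comp f.continuous).measurable.comp
      (measurable_ev _)
  · exact Eventually.of_forall fun s => Eventually.of_forall fun w => by exact_mod_cast hM _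
  · simp
  · refine Eventually.of_forall fun w => ?_
    have : Continuous fun s : ℝ => (f (w s.toNNReal) : ℝ≥0∞) :=
      ENNReal.continuous_coe.comp (f.continuous.comp (w.continuous.comp continuous_real_toNNReal))
    exact this.tendsto t

theorem Ex_pM (f : X →ᵇ ℝ≥0) (n : ℕ) (P : ProbabilityMeasure (IPath X)) :
    Ex (GI f n) P = ∫⁻ t in Ioi (0 : ℝ), ENNReal.ofReal (Real.exp (-((n : ℝ) + 1) * t)) * pM f P t := by
  unfold Ex
  simp_rw [GI_eq]
  rw [lintegral_lintegral_swap (kI_meas f n).aemeasurable]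
  refine lintegral_congr fun t => ?_
  rw [pM, ← lintegral_const_mul]
  · refine lintegral_congr fun w => ?_
    rw [kI, ENNReal.ofReal_mul (Real.exp_pos _).le, ENNReal.ofReal_coe_nnreal]
  · exact (ENNReal.continuous_coe.comp f.continuous).measurable.comp (measurable_ev _)

/-- weighted measure -/
def mM (f : X →ᵇ ℝ≥0) (P : ProbabilityMeasure (IPath X)) : Measure ℝ :=
  (volume.restrict (Ioi 0)).withDensity fun t => ENNReal.ofReal (Real.exp (-t)) * pM f P t

theorem dens_meas (f : X →ᵇ ℝ≥0) (P : ProbabilityMeasure (IPath X)) :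
    Measurable fun t : ℝ => ENNReal.ofReal (Real.exp (-t)) * pM f P t :=
  (by fun_prop : Measurable fun t : ℝ => ENNReal.ofReal (Real.exp (-t))).mul
    (pM_cont f P).measurable

theorem mM_tot (f : X →ᵇ ℝ≥0) (P : ProbabilityMeasure (IPath X)) :
    ∫⁻ t in Ioi (0 : ℝ), ENNReal.ofReal (Real.exp (-t)) * pM f P t ≠ ∞ := by
  have h := Ex_pM f 0 P
  simp only [Nat.cast_zero, zero_add, neg_mul, one_mul] at h
  rw [← h]
  exact Ex_fin _ _

theorem marg_eq {f : X →ᵇ ℝ≥0} {P P' : ProbabilityMeasure (IPath X)}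
    (h : ∀ n, Ex (GI f n) P = Ex (GI f n) P') (t : ℝ≥0) :
    ∫⁻ w, (f (w t) : ℝ≥0∞) ∂(P : Measure (IPath X)) =
      ∫⁻ w, (f (w t) : ℝ≥0∞) ∂(P' : Measure (IPath X)) := by
  have hfin : ∀ R : ProbabilityMeasure (IPath X), IsFiniteMeasure (mM f R) := fun R =>
    isFiniteMeasure_withDensity (mM_tot f R)
  have hn : ∀ (n : ℕ) (R : ProbabilityMeasure (IPath X)),
      ∫ s, Real.exp (-(s : ℝ)) ^ n ∂((mM f R).map Real.toNNReal) = (Ex (GI f n) R).toReal := by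
    intro n R
    have hc : Continuous fun s : ℝ≥0 => Real.exp (-(s : ℝ)) ^ n := by fun_prop
    rw [integral_eq_lintegral_of_nonneg_ae (Eventually.of_forall fun s => by positivity)
      hc.aestronglyMeasurable,
      lintegral_map hc.measurable.ennreal_ofReal measurable_real_toNNReal, mM,
      lintegral_withDensity_eq_lintegral_mul _ (dens_meas f R)
        (g := fun a : ℝ => ENNReal.ofReal (Real.exp (-(a.toNNReal : ℝ)) ^ n))
        (hc.measurable.ennreal_ofReal.comp measurable_real_toNNReal), Ex_pM]
    congr 1
    refine setLIntegral_congr_fun measurableSet_Ioi fun s hs => ?_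
    simp only [Pi.mul_apply]
    rw [Real.coe_toNNReal _ (le_of_lt hs), mul_right_comm,
      ← ENNReal.ofReal_mul (Real.exp_pos _).le]
    congr 2
    rw [← Real.exp_nat_mul, ← Real.exp_add]
    ring_nf
  have hν : (mM f P).map Real.toNNReal = (mM f P').map Real.toNNReal := by
    have := hfin P
    have := hfin P'
    refine laplace_unique fun n => ?_
    rw [hn, hn, h]
  have hback : ∀ R : ProbabilityMeasure (IPath X),
      ((mM f R).map Real.toNNReal).map ((↑) : ℝ≥0 → ℝ) = mM f R := by
    intro R
    rw [Measure.map_map measurable_coe_nnreal_real measurable_real_toNNReal]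
    have : (((↑) : ℝ≥0 → ℝ) ∘ Real.toNNReal) =ᵐ[mM f R] id := by
      refine (withDensity_absolutelyContinuous _ _).ae_le ?_
      filter_upwards [ae_restrict_mem measurableSet_Ioi] with s hs
      exact Real.coe_toNNReal _ (le_of_lt hs)
    rw [Measure.map_congr this, Measure.map_id]
  have hm : mM f P = mM f P' := by rw [← hback P, ← hback P', hν]
  have hae := (withDensity_eq_iff (dens_meas f P).aemeasurable (dens_meas f P').aemeasurable
    (mM_tot f P)).1 hm
  have hae2 : pM f P =ᵐ[volume.restrict (Ioi 0)] pM f P' := by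
    filter_upwards [hae] with s hs
    exact (ENNReal.mul_right_inj (by simp [Real.exp_pos]) ENNReal.ofReal_ne_top).1 hs
  have he : EqOn (pM f P) (pM f P') (Ioi 0) :=
    Measure.eqOn_open_of_ae_eq hae2 isOpen_Ioi (pM_cont f P).continuousOn
      (pM_cont f P').continuousOn
  have he2 := he.closure (pM_cont f P) (pM_cont f P')
  rw [closure_Ioi] at he2
  have := he2 (show (t : ℝ) ∈ Ici 0 from t.2)
  simpa [pM] using this

end MargSec

section UniqSec

open Filter Topology ENNReal BoundedContinuousFunction

variable {X : Type*} [TopologicalSpace X] [PolishSpace X] [MeasurableSpace X] [BorelSpace X]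

theorem const_stop (r : ℝ≥0) : IsStopT (X := X) fun _ => r := by
  intro s
  by_cases h : r ≤ s
  · have : {w : IPath X | (fun _ : IPath X => r) w ≤ s} = univ := by ext w; simp [h]
    rw [this]; exact @MeasurableSet.univ _ (natF X s)
  · have : {w : IPath X | (fun _ : IPath X => r) w ≤ s} = ∅ := by ext w; simpa using h
    rw [this]; exact @MeasurableSet.empty _ (natF X s)

theorem cyl_meas {I : Finset ℝ≥0} {A : ℝ≥0 → Set X} (hA : ∀ i, MeasurableSet (A i)) (t0 : ℝ≥0) :
    MeasurableSet {w : IPath X | ∀ i ∈ I, w (i - t0) ∈ A i} := by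
  have : {w : IPath X | ∀ i ∈ I, w (i - t0) ∈ A i} =
      ⋂ i ∈ I, (fun w : IPath X => w (i - t0)) ⁻¹' A i := by ext w; simp
  rw [this]
  exact Finset.measurableSet_biInter _ fun i _ => measurable_ev _ (hA i)

variable {D : X → Set (ProbabilityMeasure (IPath X))} {sel : X → ProbabilityMeasure (IPath X)}

theorem cyl_eq
    (hsel : ∀ U : Set (ProbabilityMeasure (IPath X)), IsOpen U → MeasurableSet (sel ⁻¹' U))
    (hselD : ∀ x, sel x ∈ D x)
    (hmarg : ∀ x, ∀ P ∈ D x, ∀ P' ∈ D x, ∀ t : ℝ≥0,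
      (P : Measure (IPath X)).map (fun w => w t) = (P' : Measure (IPath X)).map (fun w => w t))
    (hmp : ∀ x, ∀ P ∈ D x, ∀ τ : IPath X → ℝ≥0, IsStopT τ →
      ∃ Q : IPath X → ProbabilityMeasure (IPath X), QM τ Q ∧
        (∀ᵐ w ∂(P : Measure (IPath X)), Q w ∈ D (piAt τ w)) ∧ RC P τ Q)
    {A : ℝ≥0 → Set X} (hA : ∀ i, MeasurableSet (A i)) (I : Finset ℝ≥0) :
    ∀ t0 : ℝ≥0, (∀ i ∈ I, t0 ≤ i) → ∀ x, ∀ P ∈ D x, ∀ P' ∈ D x,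
      (P : Measure (IPath X)) {w | ∀ i ∈ I, w (i - t0) ∈ A i} =
        (P' : Measure (IPath X)) {w | ∀ i ∈ I, w (i - t0) ∈ A i} := by
  induction I using Finset.induction_on_min with
  | empty => intro t0 _ x P _ P' _; simp
  | insert a s has ih =>
    intro t0 ht x P hP P' hP'
    have hta : t0 ≤ a := ht a (Finset.mem_insert_self _ _)
    set τ : IPath X → ℝ≥0 := fun _ => a - t0 with hτdef
    have hτ : IsStopT τ := const_stop _
    set B : Set (IPath X) := {w | ∀ i ∈ s, w (i - a) ∈ A i} with hBdef
    have hB : MeasurableSet B := cyl_meas hA a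
    have hset : {w : IPath X | ∀ i ∈ insert a s, w (i - t0) ∈ A i} =
        ((fun w : IPath X => w (a - t0)) ⁻¹' A a) ∩ shiftAt τ ⁻¹' B := by
      ext w
      have e : ∀ i ∈ s, (a - t0) + (i - a) = i - t0 := fun i hi => by
        rw [add_comm]; exact tsub_add_tsub_cancel (has i hi).le hta
      have e2 : ∀ i, shiftAt τ w i = w ((a - t0) + i) := fun i => rfl
      simp only [mem_ofPred_eq, Finset.forall_mem_insert, mem_inter_iff, mem_preimage, hBdef, e2]
      refine and_congr_right fun _ => forall₂_congr fun i hi => ?_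
      rw [e i hi]
    have hF : MemFstopT τ ((fun w : IPath X => w (a - t0)) ⁻¹' A a) := by
      refine (memF_iff hτ _).2 ⟨measurable_ev _ (hA a), fun w w' h hw => ?_⟩
      have := h (a - t0) le_rfl
      simp only [mem_preimage] at hw ⊢
      rwa [← this]
    have hsm : Measurable fun y => (sel y : Measure (IPath X)) B :=
      (Measure.measurable_coe hB).comp (meas_of_weak hsel)
    have key : ∀ R ∈ D x, (R : Measure (IPath X)) {w | ∀ i ∈ insert a s, w (i - t0) ∈ A i} =
        ∫⁻ y in A a, (sel y : Measure (IPath X)) B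
          ∂((R : Measure (IPath X)).map fun w => w (a - t0)) := by
      intro R hR
      obtain ⟨Q, hQ, hQD, hRC⟩ := hmp x R hR τ hτ
      rw [hset, hRC _ hF _ hB, setLIntegral_map (hA a) hsm (measurable_ev _)]
      refine lintegral_congr_ae (ae_restrict_of_ae ?_)
      filter_upwards [hQD] with w hw
      exact ih a (fun i hi => (has i hi).le) _ _ hw _ (hselD _)
    rw [key P hP, key P' hP', hmarg x P hP P' hP']

theorem uniq
    (hsel : ∀ U : Set (ProbabilityMeasure (IPath X)), IsOpen U → MeasurableSet (sel ⁻¹' U))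
    (hselD : ∀ x, sel x ∈ D x)
    (hmarg : ∀ x, ∀ P ∈ D x, ∀ P' ∈ D x, ∀ t : ℝ≥0,
      (P : Measure (IPath X)).map (fun w => w t) = (P' : Measure (IPath X)).map (fun w => w t))
    (hmp : ∀ x, ∀ P ∈ D x, ∀ τ : IPath X → ℝ≥0, IsStopT τ →
      ∃ Q : IPath X → ProbabilityMeasure (IPath X), QM τ Q ∧
        (∀ᵐ w ∂(P : Measure (IPath X)), Q w ∈ D (piAt τ w)) ∧ RC P τ Q)
    {x : X} {P P' : ProbabilityMeasure (IPath X)} (hP : P ∈ D x) (hP' : P' ∈ D x) : P = P' := by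
  apply Subtype.ext
  have hgen : (instMeasurableSpaceIPath : MeasurableSpace (IPath X)) =
      MeasurableSpace.generateFrom
        {S | ∃ (I : Finset ℝ≥0) (A : ℝ≥0 → Set X), (∀ i, MeasurableSet (A i)) ∧
          S = {w : IPath X | ∀ i ∈ I, w (i - 0) ∈ A i}} := by
    apply le_antisymm
    · set m := MeasurableSpace.generateFrom
        {S | ∃ (I : Finset ℝ≥0) (A : ℝ≥0 → Set X), (∀ i, MeasurableSet (A i)) ∧
          S = {w : IPath X | ∀ i ∈ I, w (i - 0) ∈ A i}} with hm
      have : @Measurable _ _ m instMeasurableSpaceIPath (id : IPath X → IPath X) := by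
        refine @measurable_path X _ _ _ _ _ m id (fun t => ?_)
        intro B hB
        refine MeasurableSpace.measurableSet_generateFrom ⟨{t}, fun _ => B, fun _ => hB, ?_⟩
        ext w; simp
      intro S hS
      exact this hS
    · refine MeasurableSpace.generateFrom_le ?_
      rintro S ⟨I, A, hA, rfl⟩
      exact cyl_meas hA 0
  refine ext_of_generate_finite (μ := (P : Measure (IPath X))) (ν := (P' : Measure (IPath X))) _ hgen ?_ ?_ ?_
  · rintro S ⟨I, A, hA, rfl⟩ T ⟨J, B, hB, rfl⟩ -
    classical
    refine ⟨I ∪ J, fun i => (if i ∈ I then A i else univ) ∩ (if i ∈ J then B i else univ),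
      fun i => ?_, ?_⟩
    · refine MeasurableSet.inter ?_ ?_ <;> split_ifs <;> simp [hA, hB]
    · ext w
      simp only [mem_inter_iff, mem_ofPred_eq, Finset.mem_union]
      constructor
      · rintro ⟨h1, h2⟩ i _
        constructor
        · split_ifs with h
          · exact h1 i h
          · trivial
        · split_ifs with h
          · exact h2 i h
          · trivial
      · intro h
        refine ⟨fun i hi => ?_, fun i hi => ?_⟩
        · have := (h i (Or.inl hi)).1
          rwa [if_pos hi] at this
        · have := (h i (Or.inr hi)).2
          rwa [if_pos hi] at this
  · rintro S ⟨I, A, hA, rfl⟩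
    exact cyl_eq hsel hselD hmarg hmp hA I 0 (fun i _ => zero_le) x P hP P' hP'
  · simp

end UniqSec
/-- **Strong Markov selection theorem.**  Let `𝒞 : X → 2^𝒫` satisfy (C1)–(C3), and
assume (MP1) and (MP2) hold for every finite stopping time `τ`: the regular
conditional probability distributions of members of `𝒞(x)` given `ℱ_τ` lie in
`𝒞(w(τ(w)))` a.s., and `𝒞` is stable under the products `P ⊗_τ Q`.  Then there
exists a measurable selection `x ↦ P_x ∈ 𝒞(x)` with the strong Markov property
`P_x[θ_τ⁻¹(·) | ℱ_τ](w) = P_{π_τ(w)}(·)` for `P_x`-a.e. `w`, for every stopping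
time `τ`. -/
theorem strong_markov_selection
    {X : Type*} [TopologicalSpace X] [PolishSpace X] [MeasurableSpace X] [BorelSpace X]
    (C : X → Set (ProbabilityMeasure (IPath X)))
    (hC1 : ∀ x, (C x).Nonempty ∧ IsCompact (C x) ∧ ConvexMeasSet (C x))
    (hC2 : ∀ K : Set (ProbabilityMeasure (IPath X)), IsClosed K →
      MeasurableSet {x | (C x ∩ K).Nonempty})
    (hC3 : ∀ x, ∀ P ∈ C x, (P : Measure (IPath X)) {w : IPath X | w 0 = x} = 1)
    (hMP1 : ∀ x, ∀ P ∈ C x, ∀ τ : IPath X → ℝ≥0, IsStopT τ →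
      ∃ Q : IPath X → ProbabilityMeasure (IPath X),
        (∀ U : Set (ProbabilityMeasure (IPath X)), IsOpen U → MemFstopT τ (Q ⁻¹' U)) ∧
        (∀ᵐ w ∂(P : Measure (IPath X)), Q w ∈ C (piAt τ w)) ∧
        (∀ A : Set (IPath X), MemFstopT τ A →
          ∀ B : Set (IPath X), MeasurableSet B →
            (P : Measure (IPath X)) (A ∩ shiftAt τ ⁻¹' B) =
              ∫⁻ w in A, (Q w : Measure (IPath X)) B ∂(P : Measure (IPath X))))
    (hMP2 : ∀ x, ∀ P ∈ C x, ∀ τ : IPath X → ℝ≥0, IsStopT τ →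
      ∀ Q : IPath X → ProbabilityMeasure (IPath X),
        (∀ U : Set (ProbabilityMeasure (IPath X)), IsOpen U → MemFstopT τ (Q ⁻¹' U)) →
        (∀ w, Q w ∈ C (piAt τ w)) →
        ∀ R : ProbabilityMeasure (IPath X),
          ((∀ A : Set (IPath X), MemFstopT τ A →
              (R : Measure (IPath X)) A = (P : Measure (IPath X)) A) ∧
           (∀ A : Set (IPath X), MemFstopT τ A →
              ∀ B : Set (IPath X), MeasurableSet B →
                (R : Measure (IPath X)) (A ∩ shiftAt τ ⁻¹' B) =
                  ∫⁻ w in A, (Q w : Measure (IPath X)) B ∂(R : Measure (IPath X)))) →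
          R ∈ C x) :
    ∃ sel : X → ProbabilityMeasure (IPath X),
      (∀ U : Set (ProbabilityMeasure (IPath X)), IsOpen U →
        MeasurableSet (sel ⁻¹' U)) ∧
      (∀ x, sel x ∈ C x) ∧
      ∀ x, ∀ τ : IPath X → ℝ≥0, IsStopT τ →
        ∀ A : Set (IPath X), MemFstopT τ A →
          ∀ B : Set (IPath X), MeasurableSet B →
            (sel x : Measure (IPath X)) (A ∩ shiftAt τ ⁻¹' B) =
              ∫⁻ w in A, (sel (piAt τ w) : Measure (IPath X)) B
                ∂(sel x : Measure (IPath X)) := by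
  obtain ⟨g, hg⟩ := exists_sep X
  set φ : ℕ → ProbabilityMeasure (IPath X) → ENNReal :=
    fun m => Ex (GI (g (Nat.unpair m).1) (Nat.unpair m).2) with hφ
  have hφc : ∀ n, Continuous (φ n) := fun n => Ex_cont _
  have hCC : CC C := ⟨fun x => (hC1 x).1, fun x => (hC1 x).2.1, hC2⟩
  have hgood : ∀ n, Good C (itC φ C n) := by
    intro n
    induction n with
    | zero =>
      exact ⟨fun x => subset_rfl, hCC, fun x P _ τ _ Q _ h _ => h,
        fun x P hP τ hτ Q hQ hQC R h1 h2 => hMP2 x P hP τ hτ Q hQ hQC R ⟨h1, h2⟩⟩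
    | succ n ih => exact Good.step hC3 hMP1 ih (GI_dec _ _)
  set D : X → Set (ProbabilityMeasure (IPath X)) := fun x => ⋂ n, itC φ C n x with hD
  have hDC : CC D := inter_CC (itC_CC hCC hφc) (fun n x P hP => hP.1)
  obtain ⟨sel, hselm, hsel⟩ := exists_sel hDC
  have hD0 : ∀ x, D x ⊆ C x := fun x P hP => mem_iInter.1 hP 0
  have hmp : ∀ x, ∀ P ∈ D x, ∀ τ : IPath X → ℝ≥0, IsStopT τ →
      ∃ Q : IPath X → ProbabilityMeasure (IPath X), QM τ Q ∧
        (∀ᵐ w ∂(P : Measure (IPath X)), Q w ∈ D (piAt τ w)) ∧ RC P τ Q := by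
    intro x P hP τ hτ
    obtain ⟨Q, hQ, hQC, hR⟩ := hMP1 x P (hD0 x hP) τ hτ
    refine ⟨Q, hQ, ?_, hR⟩
    have : ∀ᵐ w ∂(P : Measure (IPath X)), ∀ n, Q w ∈ itC φ C n (piAt τ w) :=
      ae_all_iff.2 fun n => (hgood n).mp1 x P (mem_iInter.1 hP n) τ hτ Q hQ hQC hR
    filter_upwards [this] with w hw
    exact mem_iInter.2 hw
  have hmarg : ∀ x, ∀ P ∈ D x, ∀ P' ∈ D x, ∀ t : ℝ≥0,
      (P : Measure (IPath X)).map (fun w => w t) =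
        (P' : Measure (IPath X)).map (fun w => w t) := by
    intro x P hP P' hP' t
    have hev := measurable_ev (X := X) t
    refine hg _ _ (Measure.isProbabilityMeasure_map hev.aemeasurable)
      (Measure.isProbabilityMeasure_map hev.aemeasurable) fun k => ?_
    have hgm : Measurable fun y => (g k y : ENNReal) :=
      (ENNReal.continuous_coe.comp (g k).continuous).measurable
    rw [lintegral_map hgm hev, lintegral_map hgm hev]
    refine marg_eq (fun n => ?_) t
    have := itC_eq hP hP' (Nat.pair k n)
    simpa [hφ] using this
  refine ⟨sel, hselm, fun x => hD0 x (hsel x), ?_⟩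
  intro x τ hτ A hA B hB
  obtain ⟨Q, hQ, hQD, hR⟩ := hmp x (sel x) (hsel x) τ hτ
  rw [hR A hA B hB]
  refine lintegral_congr_ae (ae_restrict_of_ae ?_)
  filter_upwards [hQD] with w hw
  rw [uniq hselm hsel hmarg hmp hw (hsel _)]
end
end

section
/- Let f : ℝ^d → ℝ^d be continuous, and for x ∈ ℝ^d let S(x) ⊆ Ω = C([0,∞) → ℝ^d) be the set of all global solutions u with u(t) = x + ∫₀^t f(u(s)) ds for all t ≥ 0. Assume that for every x the set S(x) is nonempty, and that for every compact K ⊆ ℝ^d the set S(K) = ⋃_{x ∈ K} S(x) is compact in Ω (with the topology of uniform convergence on compacts). Then there exists a Borel measurable map 𝔲 : ℝ^d → Ω such that 𝔲(·, x) ∈ S(x) for every x ∈ ℝ^d and the semigroup property holds: 𝔲(t₂, 𝔲(t₁, x)) = 𝔲(t₁ + t₂, x) for all t₁, t₂ ≥ 0 and all x ∈ ℝ^d. -/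
open MeasureTheory Set
open scoped NNReal

noncomputable section

/-- The Borel σ-algebra on the path space. -/
instance {X : Type*} [TopologicalSpace X] : MeasurableSpace (IPath X) := borel _
instance {X : Type*} [TopologicalSpace X] : BorelSpace (IPath X) := ⟨rfl⟩

/-- The integral funnel `S(x)`: all global solutions of `du/dt = f(u)`, `u(0) = x`,
in integral form `u(t) = x + ∫₀^t f(u(s)) ds`. -/
def sol {d : ℕ} (f : EuclideanSpace ℝ (Fin d) → EuclideanSpace ℝ (Fin d))
    (x : EuclideanSpace ℝ (Fin d)) : Set (IPath (EuclideanSpace ℝ (Fin d))) :=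
  {u | ∀ t : ℝ≥0, u t = x + ∫ s in Ioc (0 : ℝ) (t : ℝ), f (u (Real.toNNReal s))}

namespace SemiSel

/-- splitting a finite integral -/
lemma split_fin {F : Type*} [NormedAddCommGroup F] [NormedSpace ℝ F]
    (g : ℝ → F) (hg : Continuous g) (t s : ℝ) (ht : 0 ≤ t) (hs : 0 ≤ s) :
    ∫ r in Ioc (0:ℝ) (t + s), g r
      = (∫ r in Ioc (0:ℝ) t, g r) + ∫ r in Ioc (0:ℝ) s, g (t + r) := by
  rw [← intervalIntegral.integral_of_le (by linarith), ← intervalIntegral.integral_of_le ht,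
    ← intervalIntegral.integral_of_le hs, intervalIntegral.integral_comp_add_left,
    add_zero, intervalIntegral.integral_add_adjacent_intervals]
  · exact hg.intervalIntegrable _ _
  · exact hg.intervalIntegrable _ _

lemma split_inf (g : ℝ → ℝ) (hg : IntegrableOn g (Ioi 0)) (t : ℝ) (ht : 0 ≤ t) :
    ∫ r in Ioi (0:ℝ), g r
      = (∫ r in Ioc (0:ℝ) t, g r) + ∫ r in Ioi (0:ℝ), g (t + r) := by
  have h1 : ∫ r in Ioi (0:ℝ), g (t + r) = ∫ r in Ioi t, g r := by
    have := (measurePreserving_add_left volume t).setIntegral_preimage_emb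
      (measurableEmbedding_addLeft t) g (Ioi t)
    rw [← this]
    congr 2
    ext r
    simp
  rw [h1, ← setIntegral_union (Ioc_disjoint_Ioi le_rfl) measurableSet_Ioi
    (hg.mono_set Ioc_subset_Ioi_self) (hg.mono_set (Ioi_subset_Ioi ht)),
    Ioc_union_Ioi_eq_Ioi ht]

lemma integrable_lap (g : ℝ → ℝ) (hg : Continuous g) (C : ℝ) (hC : ∀ x, |g x| ≤ C)
    (l : ℝ) (hl : 0 < l) : IntegrableOn (fun s => Real.exp (-l * s) * g s) (Ioi 0) := by
  refine Integrable.mono' (g := fun s => C * Real.exp (-l * s))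
    ((exp_neg_integrableOn_Ioi 0 hl).const_mul C) ?_ ?_
  · exact (by fun_prop : Continuous fun s => Real.exp (-l * s) * g s).aestronglyMeasurable
  · refine Filter.Eventually.of_forall fun s => ?_
    rw [norm_mul, Real.norm_eq_abs, Real.norm_eq_abs, abs_of_pos (Real.exp_pos _), mul_comm]
    exact mul_le_mul_of_nonneg_right (hC s) (Real.exp_pos _).le

/-- uniqueness for Laplace transforms at positive integers -/
lemma lap_unique (g : ℝ → ℝ) (hg : Continuous g) (C : ℝ) (hC : ∀ x, |g x| ≤ C)
    (h0 : ∀ n : ℕ, ∫ s in Ioi (0:ℝ), Real.exp (-((n:ℝ) + 1) * s) * g s = 0) :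
    ∀ s, 0 ≤ s → g s = 0 := by
  have hC0 : 0 ≤ C := (abs_nonneg _).trans (hC 0)
  -- key function
  set h : ℝ → ℝ := fun s => Real.exp (-1 * s) * g s with hh
  have hhc : Continuous h := by rw [hh]; fun_prop
  have hint : IntegrableOn h (Ioi 0) := integrable_lap g hg C hC 1 one_pos
  have hhb : ∀ s ∈ Ioi (0:ℝ), |h s| ≤ C := by
    intro s hs
    simp only [hh, abs_mul, abs_of_pos (Real.exp_pos _)]
    have : Real.exp (-1 * s) ≤ 1 := Real.exp_le_one_iff.2 (by have : 0 < s := hs; linarith)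
    calc _ ≤ 1 * C := mul_le_mul this (hC s) (abs_nonneg _) zero_le_one
      _ = C := one_mul C
  have hpoly : ∀ p : Polynomial ℝ,
      IntegrableOn (fun s => p.eval (Real.exp (-s)) * h s) (Ioi 0) ∧
      ∫ s in Ioi (0:ℝ), p.eval (Real.exp (-s)) * h s = 0 := by
    intro p
    induction p using Polynomial.induction_on' with
    | add p q hp hq =>
      have e : (fun s => (p + q).eval (Real.exp (-s)) * h s)
        = fun s => p.eval (Real.exp (-s)) * h s + q.eval (Real.exp (-s)) * h s := by
        ext s; simp [add_mul]
      rw [e]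
      refine ⟨hp.1.add hq.1, ?_⟩
      rw [integral_add hp.1 hq.1, hp.2, hq.2, add_zero]
    | monomial n a =>
      have e : (fun s => (Polynomial.monomial n a).eval (Real.exp (-s)) * h s)
        = fun s => a * (Real.exp (-((n:ℝ) + 1) * s) * g s) := by
        ext s
        have : Real.exp (-((n:ℝ) + 1) * s) = Real.exp (-s) ^ n * Real.exp (-1 * s) := by
          rw [← Real.exp_nat_mul, ← Real.exp_add]; congr 1; ring
        simp only [Polynomial.eval_monomial, this, hh]; ring
      rw [e]
      refine ⟨(integrable_lap g hg C hC _ (by positivity)).const_mul a, ?_⟩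
      rw [integral_const_mul, h0, mul_zero]
  have hH : Continuous (fun s => s * g (-Real.log s)) := by
    rw [continuous_iff_continuousAt]
    intro s
    by_cases hs : s = 0
    · subst hs
      unfold ContinuousAt
      simp only [zero_mul]
      refine squeeze_zero_norm (a := fun s => |s| * C) (fun s => ?_) ?_
      · rw [norm_mul]; exact mul_le_mul_of_nonneg_left (hC _) (abs_nonneg _)
      · have : Continuous (fun s : ℝ => |s| * C) := by fun_prop
        simpa using this.tendsto 0
    · exact continuousAt_id.mul (hg.continuousAt.comp (Real.continuousAt_log hs).neg)
  have hsq_int : IntegrableOn (fun s => h s * h s) (Ioi 0) := by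
    refine Integrable.bdd_mul (c := C) hint hhc.aestronglyMeasurable ?_
    exact (ae_restrict_iff' measurableSet_Ioi).2 (Filter.Eventually.of_forall hhb)
  have hsmall : ∀ ε > 0, ∫ s in Ioi (0:ℝ), h s * h s ≤ ε * ∫ s in Ioi (0:ℝ), |h s| := by
    intro ε hε
    obtain ⟨p, hp⟩ := exists_polynomial_near_of_continuousOn 0 1 _ hH.continuousOn ε hε
    have hp1 := (hpoly p).1
    have : ∫ s in Ioi (0:ℝ), h s * h s
        = ∫ s in Ioi (0:ℝ), (h s * h s - p.eval (Real.exp (-s)) * h s) := by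
      rw [integral_sub hsq_int hp1, (hpoly p).2, sub_zero]
    rw [this, ← integral_const_mul]
    refine setIntegral_mono_on (hsq_int.sub hp1) (hint.abs.const_mul ε) measurableSet_Ioi ?_
    intro s hs
    have hs' : 0 < s := hs
    have := hp (Real.exp (-s)) ⟨(Real.exp_pos _).le, Real.exp_le_one_iff.2 (by linarith)⟩
    rw [Real.log_exp, neg_neg] at this
    have hhs : h s = Real.exp (-s) * g s := by simp [hh]
    rw [← sub_mul]
    calc _ ≤ |(h s - p.eval (Real.exp (-s))) * h s| := le_abs_self _
      _ = |h s - p.eval (Real.exp (-s))| * |h s| := abs_mul _ _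
      _ ≤ ε * |h s| := by
        refine mul_le_mul_of_nonneg_right ?_ (abs_nonneg _)
        rw [abs_sub_comm, hhs]; exact this.le
  have hnn : 0 ≤ ∫ s in Ioi (0:ℝ), |h s| := integral_nonneg fun s => abs_nonneg _
  have hle : ∫ s in Ioi (0:ℝ), h s * h s ≤ 0 := by
    set I := ∫ s in Ioi (0:ℝ), |h s|
    refine le_of_forall_pos_le_add fun δ hδ => ?_
    refine (hsmall (δ / (I + 1)) (by positivity)).trans ?_
    rw [zero_add, div_mul_eq_mul_div, div_le_iff₀ (by positivity)]
    nlinarith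
  have hz : ∫ s in Ioi (0:ℝ), h s * h s = 0 :=
    le_antisymm hle (integral_nonneg fun s => mul_self_nonneg _)
  have hae := (integral_eq_zero_iff_of_nonneg (fun s => mul_self_nonneg (h s)) hsq_int).1 hz
  have heq : EqOn (fun s => h s * h s) (fun _ => 0) (Ioi 0) :=
    Measure.eqOn_open_of_ae_eq hae isOpen_Ioi (hhc.mul hhc).continuousOn continuousOn_const
  have hgz : EqOn g (fun _ => 0) (Ioi 0) := by
    intro s hs
    have := mul_self_eq_zero.1 (heq hs)
    exact (mul_eq_zero.1 this).resolve_left (Real.exp_pos _).ne'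
  have := hgz.closure hg continuous_const
  intro s hs
  refine this ?_
  rw [closure_Ioi]; exact hs

section
variable {X : Type*} [MetricSpace X]

lemma exists_splice (u v : C(ℝ≥0, X)) (t : ℝ≥0) (h : v 0 = u t) :
    ∃ w : C(ℝ≥0, X), (∀ s ≤ t, w s = u s) ∧ ∀ s, w (t + s) = v s := by
  refine ⟨⟨fun s => if s ≤ t then u s else v (s - t), ?_⟩, ?_, ?_⟩
  · refine Continuous.if_le u.continuous (by fun_prop) continuous_id continuous_const ?_
    intro s hs; subst hs; simp [h]
  · intro s hs; simp [hs]
  · intro s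
    by_cases hs : s = 0
    · subst hs; simp [h]
    · have : ¬ (t + s ≤ t) := by simpa using hs
      simp [this]

/-- shifted path -/
def shift (t : ℝ≥0) (u : C(ℝ≥0, X)) : C(ℝ≥0, X) := ⟨fun s => u (t + s), by fun_prop⟩

structure Good [MeasurableSpace X] (S : X → Set (C(ℝ≥0, X))) : Prop where
  ne : ∀ x, (S x).Nonempty
  cpt : ∀ x, IsCompact (S x)
  meas : ∀ F : Set (C(ℝ≥0, X)), IsClosed F → MeasurableSet {x | (S x ∩ F).Nonempty}
  start : ∀ x, ∀ u ∈ S x, u 0 = x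
  shift : ∀ x, ∀ u ∈ S x, ∀ t, shift t u ∈ S (u t)
  splice : ∀ x, ∀ u ∈ S x, ∀ t, ∀ v ∈ S (u t), ∀ w : C(ℝ≥0, X),
    (∀ s ≤ t, w s = u s) → (∀ s, w (t + s) = v s) → w ∈ S x

def step (J : C(ℝ≥0, X) → ℝ) (S : X → Set (C(ℝ≥0, X))) (x : X) : Set (C(ℝ≥0, X)) :=
  {u | u ∈ S x ∧ ∀ v ∈ S x, J v ≤ J u}

/-- additive structure of the functional -/
def Adm (J : C(ℝ≥0, X) → ℝ) : Prop :=
  ∀ t : ℝ≥0, ∃ c > 0, ∃ A : C(ℝ≥0, X) → ℝ, (∀ u w : C(ℝ≥0, X), (∀ s ≤ t, w s = u s) → A w = A u) ∧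
    ∀ u, J u = A u + c * J (shift t u)

lemma shift_eq {t : ℝ≥0} {w v : C(ℝ≥0, X)} (h : ∀ s, w (t + s) = v s) : shift t w = v := by
  ext s; exact h s

lemma Good.step [MeasurableSpace X] {S : X → Set (C(ℝ≥0, X))} (hS : Good S)
    {J : C(ℝ≥0, X) → ℝ} (hJ : Continuous J) (hA : Adm J) : Good (step J S) where
  ne x := by
    obtain ⟨u, hu, hm⟩ := (hS.cpt x).exists_isMaxOn (hS.ne x) hJ.continuousOn
    exact ⟨u, hu, fun v hv => hm hv⟩
  cpt x := by
    have : SemiSel.step J S x = S x ∩ ⋂ v ∈ S x, {u | J v ≤ J u} := by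
      ext u; simp [SemiSel.step]
    rw [this]
    exact (hS.cpt x).inter_right
      (isClosed_biInter fun v _ => isClosed_le continuous_const hJ)
  meas F hF := by
    have hcl : ∀ c : ℝ, IsClosed {u | c ≤ J u} := fun c => isClosed_le continuous_const hJ
    have : {x | (SemiSel.step J S x ∩ F).Nonempty} = {x | (S x ∩ F).Nonempty} ∩
        ⋂ c : ℚ, ({x | (S x ∩ {u | (c:ℝ) ≤ J u}).Nonempty}ᶜ ∪
          {x | (S x ∩ (F ∩ {u | (c:ℝ) ≤ J u})).Nonempty}) := by
      ext x
      simp only [mem_inter_iff, mem_iInter, mem_union, mem_compl_iff, mem_ofPred_eq]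
      constructor
      · rintro ⟨u, ⟨hu, hm⟩, huF⟩
        refine ⟨⟨u, hu, huF⟩, fun c => ?_⟩
        by_cases h : (S x ∩ {u | (c:ℝ) ≤ J u}).Nonempty
        · obtain ⟨v, hv, hc⟩ := h
          exact Or.inr ⟨u, hu, huF, le_trans hc (hm v hv)⟩
        · exact Or.inl h
      · rintro ⟨hne, hc⟩
        obtain ⟨u, hu, hm⟩ := ((hS.cpt x).inter_right hF).exists_isMaxOn hne hJ.continuousOn
        refine ⟨u, ⟨hu.1, fun v hv => ?_⟩, hu.2⟩
        by_contra! hlt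
        obtain ⟨c, hc1, hc2⟩ := exists_rat_btwn hlt
        rcases hc c with h | ⟨w, hw, hwF, hwc⟩
        · exact h ⟨v, hv, hc2.le⟩
        · have h1 : J w ≤ J u := hm ⟨hw, hwF⟩
          have h2 : (c:ℝ) ≤ J w := hwc
          linarith
    rw [this]
    exact (hS.meas F hF).inter (MeasurableSet.iInter fun c =>
      (hS.meas _ (hcl c)).compl.union (hS.meas _ (hF.inter (hcl c))))
  start x u hu := hS.start x u hu.1
  shift x u hu t := by
    refine ⟨hS.shift x u hu.1 t, fun v hv => ?_⟩
    obtain ⟨w, hw1, hw2⟩ := exists_splice u v t (hS.start _ v hv)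
    have hw := hu.2 w (hS.splice x u hu.1 t v hv w hw1 hw2)
    obtain ⟨c, hc, A, hA1, hA2⟩ := hA t
    rw [hA2 w, hA2 u, hA1 u w hw1, shift_eq hw2] at hw
    exact le_of_mul_le_mul_left (by linarith) hc
  splice x u hu t v hv w hw1 hw2 := by
    refine ⟨hS.splice x u hu.1 t v hv.1 w hw1 hw2, fun z hz => (hu.2 z hz).trans ?_⟩
    obtain ⟨c, hc, A, hA1, hA2⟩ := hA t
    rw [hA2 w, hA2 u, hA1 u w hw1, shift_eq hw2]
    have := mul_le_mul_of_nonneg_left (hv.2 _ (hS.shift x u hu.1 t)) hc.le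
    linarith

def seq (J : ℕ → C(ℝ≥0, X) → ℝ) (S : X → Set (C(ℝ≥0, X))) : ℕ → X → Set (C(ℝ≥0, X))
  | 0 => S
  | n + 1 => step (J n) (seq J S n)

theorem abstract_selection [MeasurableSpace X] {S : X → Set (C(ℝ≥0, X))} (hS : Good S)
    (J : ℕ → C(ℝ≥0, X) → ℝ) (hJ : ∀ n, Continuous (J n)) (hA : ∀ n, Adm (J n))
    (hsep : ∀ u v, (∀ n, J n u = J n v) → u = v) :
    ∃ u : X → C(ℝ≥0, X), (∀ F, IsClosed F → MeasurableSet (u ⁻¹' F)) ∧ (∀ x, u x ∈ S x) ∧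
      ∀ x, ∀ t₁ t₂ : ℝ≥0, u (u x t₁) t₂ = u x (t₁ + t₂) := by
  have hG : ∀ n, Good (seq J S n) := by
    intro n
    induction n with
    | zero => exact hS
    | succ n ih => exact ih.step (hJ n) (hA n)
  have hanti : ∀ n x, seq J S (n + 1) x ⊆ seq J S n x := fun n x u hu => hu.1
  have hcap : ∀ x (F : Set (C(ℝ≥0, X))), IsClosed F → (∀ n, (seq J S n x ∩ F).Nonempty) →
      ∃ u ∈ F, ∀ n, u ∈ seq J S n x := by
    intro x F hF h
    obtain ⟨u, hu⟩ := IsCompact.nonempty_iInter_of_sequence_nonempty_isCompact_isClosed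
      (fun n => seq J S n x ∩ F) (fun n => inter_subset_inter_left _ (hanti n x)) h
      (((hG 0).cpt x).inter_right hF)
      (fun n => ((hG n).cpt x).isClosed.inter hF)
    simp only [mem_iInter] at hu
    exact ⟨u, (hu 0).2, fun n => (hu n).1⟩
  have huniq : ∀ x u v, (∀ n, u ∈ seq J S n x) → (∀ n, v ∈ seq J S n x) → u = v := by
    intro x u v hu hv
    refine hsep u v fun n => le_antisymm ?_ ?_
    · exact (hv (n + 1)).2 u (hu n)
    · exact (hu (n + 1)).2 v (hv n)
  have hex : ∀ x, ∃ u, ∀ n, u ∈ seq J S n x := by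
    intro x
    obtain ⟨u, -, hu⟩ := hcap x univ isClosed_univ (fun n => by simpa using (hG n).ne x)
    exact ⟨u, hu⟩
  choose u hu using hex
  refine ⟨u, fun F hF => ?_, fun x => hu x 0, fun x t₁ t₂ => ?_⟩
  · have : u ⁻¹' F = ⋂ n, {x | (seq J S n x ∩ F).Nonempty} := by
      ext x
      simp only [mem_preimage, mem_iInter, mem_ofPred_eq]
      constructor
      · exact fun h n => ⟨u x, hu x n, h⟩
      · intro h
        obtain ⟨v, hvF, hv⟩ := hcap x F hF h
        rwa [huniq x (u x) v (hu x) hv]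
    rw [this]
    exact MeasurableSet.iInter fun n => (hG n).meas F hF
  · have := huniq (u x t₁) (u (u x t₁)) (SemiSel.shift t₁ (u x)) (hu _)
      (fun n => (hG n).shift x (u x) (hu x n) t₁)
    rw [this]; rfl

/-- the test functional -/
def lap (l : ℝ) (q : X) (u : C(ℝ≥0, X)) : ℝ :=
  ∫ s in Ioi (0:ℝ), Real.exp (-l * s) * Real.arctan (dist (u s.toNNReal) q)

lemma arctan_bdd (a : ℝ) : |Real.arctan a| ≤ Real.pi / 2 :=
  abs_le.2 ⟨(Real.neg_pi_div_two_lt_arctan a).le, (Real.arctan_lt_pi_div_two a).le⟩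

lemma obs_cont (q : X) (u : C(ℝ≥0, X)) :
    Continuous fun s : ℝ => Real.arctan (dist (u s.toNNReal) q) :=
  Real.continuous_arctan.comp
    ((u.continuous.comp continuous_real_toNNReal).dist continuous_const)

lemma lap_int (l : ℝ) (hl : 0 < l) (q : X) (u : C(ℝ≥0, X)) :
    IntegrableOn (fun s => Real.exp (-l * s) * Real.arctan (dist (u s.toNNReal) q)) (Ioi 0) :=
  integrable_lap _ (obs_cont q u) _ (fun _ => arctan_bdd _) l hl

lemma lap_cont (l : ℝ) (hl : 0 < l) (q : X) : Continuous (lap l q) := by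
  refine continuous_of_dominated (bound := fun s => (Real.pi / 2) * Real.exp (-l * s))
    (fun u => (lap_int l hl q u).aestronglyMeasurable) (fun u => ?_)
    ((exp_neg_integrableOn_Ioi 0 hl).const_mul _) ?_
  · refine Filter.Eventually.of_forall fun s => ?_
    rw [norm_mul, Real.norm_eq_abs, Real.norm_eq_abs, abs_of_pos (Real.exp_pos _), mul_comm]
    exact mul_le_mul_of_nonneg_right (arctan_bdd _) (Real.exp_pos _).le
  · refine Filter.Eventually.of_forall fun s => ?_
    exact continuous_const.mul (Real.continuous_arctan.comp
      ((continuous_eval_const _).dist continuous_const))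

lemma lap_adm (l : ℝ) (hl : 0 < l) (q : X) : Adm (lap l q) := by
  intro t
  refine ⟨Real.exp (-l * t), Real.exp_pos _,
    fun u => ∫ s in Ioc (0:ℝ) t, Real.exp (-l * s) * Real.arctan (dist (u s.toNNReal) q), ?_, ?_⟩
  · intro u w h
    refine setIntegral_congr_fun measurableSet_Ioc fun s hs => ?_
    rw [h _ (Real.toNNReal_le_iff_le_coe.2 hs.2)]
  · intro u
    unfold lap
    rw [split_inf _ (lap_int l hl q u) t t.coe_nonneg, ← integral_const_mul]
    congr 1
    refine setIntegral_congr_fun measurableSet_Ioi fun s hs => ?_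
    have hs' : 0 ≤ s := le_of_lt hs
    simp only [shift, ContinuousMap.coe_mk]
    rw [Real.toNNReal_add t.coe_nonneg hs', Real.toNNReal_coe, mul_add, Real.exp_add, mul_assoc]

lemma lap_sep [TopologicalSpace.SeparableSpace X] [Nonempty X] (u v : C(ℝ≥0, X))
    (h : ∀ n i : ℕ, lap ((n:ℝ) + 1) (TopologicalSpace.denseSeq X i) u
      = lap ((n:ℝ) + 1) (TopologicalSpace.denseSeq X i) v) : u = v := by
  have key : ∀ i (t : ℝ≥0), dist (u t) (TopologicalSpace.denseSeq X i)
      = dist (v t) (TopologicalSpace.denseSeq X i) := by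
    intro i t
    set q := TopologicalSpace.denseSeq X i
    have := lap_unique (fun s => Real.arctan (dist (u s.toNNReal) q)
      - Real.arctan (dist (v s.toNNReal) q)) ((obs_cont q u).sub (obs_cont q v))
      (Real.pi / 2 + Real.pi / 2)
      (fun s => (abs_sub _ _).trans (add_le_add (arctan_bdd _) (arctan_bdd _)))
      (fun n => by
        simp only [mul_sub]
        rw [integral_sub (lap_int _ (by positivity) q u) (lap_int _ (by positivity) q v)]
        exact sub_eq_zero.2 (h n i)) t t.coe_nonneg
    simp only [Real.toNNReal_coe] at this
    exact Real.arctan_injective (sub_eq_zero.1 this)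
  ext t
  have := (TopologicalSpace.denseRange_denseSeq X).equalizer
    (g := fun q => dist (u t) q) (h := fun q => dist (v t) q) (by fun_prop) (by fun_prop)
    (funext fun i => key i t)
  have := congrFun this (v t)
  simpa using this

end

section
variable {d : ℕ} {f : EuclideanSpace ℝ (Fin d) → EuclideanSpace ℝ (Fin d)}

lemma rhs_cont (hf : Continuous f) (u : C(ℝ≥0, EuclideanSpace ℝ (Fin d))) :
    Continuous fun s : ℝ => f (u s.toNNReal) :=
  hf.comp (u.continuous.comp continuous_real_toNNReal)

lemma sol_split (hf : Continuous f) (u : C(ℝ≥0, EuclideanSpace ℝ (Fin d))) (t s : ℝ≥0) :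
    ∫ r in Ioc (0:ℝ) ((t + s : ℝ≥0) : ℝ), f (u r.toNNReal)
      = (∫ r in Ioc (0:ℝ) t, f (u r.toNNReal))
        + ∫ r in Ioc (0:ℝ) s, f (u (t + r.toNNReal)) := by
  rw [NNReal.coe_add, split_fin _ (rhs_cont hf u) t s t.coe_nonneg s.coe_nonneg]
  congr 1
  refine setIntegral_congr_fun measurableSet_Ioc fun r hr => ?_
  rw [Real.toNNReal_add t.coe_nonneg hr.1.le, Real.toNNReal_coe]

lemma sol_start {x} {u : C(ℝ≥0, EuclideanSpace ℝ (Fin d))} (hu : u ∈ sol f x) : u 0 = x := by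
  simpa using hu 0

lemma sol_good (hf : Continuous f)
    (hne : ∀ x, (sol f x).Nonempty)
    (hcpt : ∀ K : Set (EuclideanSpace ℝ (Fin d)), IsCompact K →
      IsCompact (⋃ x ∈ K, sol f x)) : Good (sol f) where
  ne := hne
  cpt x := by simpa using hcpt {x} isCompact_singleton
  start x u hu := sol_start hu
  meas F hF := by
    have : {x | (sol f x ∩ F).Nonempty} = ⋃ n : ℕ, (fun u : C(ℝ≥0, _) => u 0) ''
        ((⋃ x ∈ Metric.closedBall (0 : EuclideanSpace ℝ (Fin d)) n, sol f x) ∩ F) := by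
      ext x
      simp only [mem_ofPred_eq, mem_iUnion, mem_image, mem_inter_iff]
      constructor
      · rintro ⟨u, hu, huF⟩
        obtain ⟨n, hn⟩ := exists_nat_ge (dist x 0)
        exact ⟨n, u, ⟨⟨x, hn, hu⟩, huF⟩, sol_start hu⟩
      · rintro ⟨n, u, ⟨⟨y, hy, hu⟩, huF⟩, hx⟩
        rw [sol_start hu] at hx
        subst hx
        exact ⟨u, hu, huF⟩
    rw [this]
    refine MeasurableSet.iUnion fun n => IsCompact.measurableSet ?_
    exact ((hcpt _ (isCompact_closedBall 0 _)).inter_right hF).image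
      (continuous_eval_const 0)
  shift x u hu t s := by
    have h1 := hu (t + s)
    have h2 := hu t
    rw [sol_split hf, ← add_assoc, ← h2] at h1
    exact h1
  splice x u hu t v hv w hw1 hw2 := by
    have hfirst : ∀ s ≤ t, w s = x + ∫ r in Ioc (0:ℝ) s, f (w r.toNNReal) := by
      intro s hs
      rw [hw1 s hs, hu s]
      congr 1
      refine setIntegral_congr_fun measurableSet_Ioc fun r hr => ?_
      rw [hw1 _ ((Real.toNNReal_le_iff_le_coe.2 hr.2).trans hs)]
    intro s
    rcases le_total s t with h | h
    · exact hfirst s h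
    · obtain ⟨r, rfl⟩ := exists_add_of_le h
      rw [sol_split hf, ← add_assoc, ← hfirst t le_rfl, hw1 t le_rfl, hw2 r, hv r]
      simp only [hw2]

end

end SemiSel

/-- **Semiflow selection for ODEs.**  If `f : ℝ^d → ℝ^d` is continuous, every initial
condition has at least one global solution, and integral funnels over compacta are
compact (Aronszajn), then there is a Borel measurable selection of solutions
`𝔲 : ℝ^d → Ω` with `𝔲(·, x) ∈ S(x)` and the semigroup property
`𝔲(t₂, 𝔲(t₁, x)) = 𝔲(t₁ + t₂, x)`. -/
theorem ode_semiflow_selection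
    {d : ℕ} (f : EuclideanSpace ℝ (Fin d) → EuclideanSpace ℝ (Fin d))
    (hf : Continuous f)
    (hne : ∀ x, (sol f x).Nonempty)
    (hcpt : ∀ K : Set (EuclideanSpace ℝ (Fin d)), IsCompact K →
      IsCompact (⋃ x ∈ K, sol f x)) :
    ∃ u : EuclideanSpace ℝ (Fin d) → IPath (EuclideanSpace ℝ (Fin d)),
      Measurable u ∧ (∀ x, u x ∈ sol f x) ∧
      ∀ x, ∀ t₁ t₂ : ℝ≥0, u (u x t₁) t₂ = u x (t₁ + t₂) := by
  obtain ⟨u, hm, hs, hsg⟩ := SemiSel.abstract_selection (SemiSel.sol_good hf hne hcpt)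
    (fun k => SemiSel.lap (((Nat.unpair k).1 : ℝ) + 1)
      (TopologicalSpace.denseSeq _ (Nat.unpair k).2))
    (fun k => SemiSel.lap_cont _ (by positivity) _)
    (fun k => SemiSel.lap_adm _ (by positivity) _)
    (fun u v h => SemiSel.lap_sep u v fun n i => by
      simpa using h (Nat.pair n i))
  exact ⟨u, measurable_of_isClosed fun F hF => hm F hF, hs, hsg⟩
end
end

section
/- Let F be a set-valued map from ℝ^d to the nonempty compact convex subsets of ℝ^d which is upper semicontinuous and satisfies the Nagumo growth condition: there exists a nondecreasing continuous ψ : [0,∞) → (0,∞) with ∫^∞ dr/ψ(r) = ∞ such that |v| ≤ ψ(|u|) for all u ∈ ℝ^d and all v ∈ F(u). For x ∈ ℝ^d let S(x) be the set of locally absolutely continuous paths u : [0,∞) → ℝ^d with u(0) = x and u'(t) ∈ F(u(t)) for almost every t ≥ 0. Then there exists a Borel measurable map 𝔲 : ℝ^d → C([0,∞) → ℝ^d) (with the topology of uniform convergence on compacts) such that 𝔲(·, x) ∈ S(x) for every x and 𝔲(t₂, 𝔲(t₁, x)) = 𝔲(t₁ + t₂, x) for all t₁, t₂ ≥ 0 and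 all x ∈ ℝ^d. -/
open MeasureTheory Set
open scoped NNReal

noncomputable section

/-- Membership of a continuous path `u` in the solution funnel `S(x)` of the
differential inclusion `u' ∈ F(u)`, `u(0) = x`: `u` is locally absolutely continuous
with `u(t) = x + ∫₀^t g(s) ds` for a locally integrable selection `g(s) ∈ F(u(s))`
a.e. -/
def InclusionSol {d : ℕ} (F : EuclideanSpace ℝ (Fin d) → Set (EuclideanSpace ℝ (Fin d)))
    (x : EuclideanSpace ℝ (Fin d)) (u : IPath (EuclideanSpace ℝ (Fin d))) : Prop :=
  u 0 = x ∧ ∃ g : ℝ → EuclideanSpace ℝ (Fin d),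
    (∀ T : ℝ, 0 ≤ T → IntegrableOn g (Ioc (0 : ℝ) T) volume) ∧
    (∀ t : ℝ≥0, u t = x + ∫ s in Ioc (0 : ℝ) (t : ℝ), g s) ∧
    (∀ᵐ s ∂(volume.restrict (Ioi (0 : ℝ))), g s ∈ F (u (Real.toNNReal s)))

open Filter Topology

namespace SFS

/-- time shift -/
def shiftP {X : Type*} [TopologicalSpace X] (t : ℝ≥0) (u : C(ℝ≥0, X)) : C(ℝ≥0, X) :=
  ⟨fun r => u (t + r), by fun_prop⟩

/-- concatenation -/
def spliceP {X : Type*} [NormedAddCommGroup X] (t : ℝ≥0) (u v : C(ℝ≥0, X)) : C(ℝ≥0, X) :=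
  ⟨fun r => u (min r t) + (v (r - t) - v 0), by fun_prop⟩

@[simp] lemma shiftP_apply {X : Type*} [TopologicalSpace X] (t : ℝ≥0) (u : C(ℝ≥0, X)) (r : ℝ≥0) :
    shiftP t u r = u (t + r) := rfl

lemma spliceP_apply_le {X : Type*} [NormedAddCommGroup X] (t : ℝ≥0) (u v : C(ℝ≥0, X)) (r : ℝ≥0)
    (h : r ≤ t) : spliceP t u v r = u r := by
  show u (min r t) + (v (r - t) - v 0) = u r
  rw [min_eq_left h, tsub_eq_zero_of_le h]; simp

lemma spliceP_apply_add {X : Type*} [NormedAddCommGroup X] (t : ℝ≥0) (u v : C(ℝ≥0, X)) (r : ℝ≥0)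
    (h : v 0 = u t) : spliceP t u v (t + r) = v r := by
  show u (min (t + r) t) + (v (t + r - t) - v 0) = v r
  rw [min_eq_right (by simp), add_tsub_cancel_left, h]; simp

lemma shiftP_spliceP {X : Type*} [NormedAddCommGroup X] (t : ℝ≥0) (u v : C(ℝ≥0, X))
    (h : v 0 = u t) : shiftP t (spliceP t u v) = v := by
  ext1 r
  rw [shiftP_apply, spliceP_apply_add _ _ _ _ h]

structure Good {X : Type*} [NormedAddCommGroup X] [MeasurableSpace X]
    (S : X → Set C(ℝ≥0, X)) : Prop where
  ne : ∀ x, (S x).Nonempty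
  cpt : ∀ x, IsCompact (S x)
  start : ∀ x, ∀ u ∈ S x, u 0 = x
  meas : ∀ C, IsClosed C → MeasurableSet {x | (S x ∩ C).Nonempty}
  shift : ∀ x, ∀ u ∈ S x, ∀ t, shiftP t u ∈ S (u t)
  splice : ∀ x, ∀ u ∈ S x, ∀ t, ∀ v ∈ S (u t), spliceP t u v ∈ S x

def argm {X : Type*} [NormedAddCommGroup X]
    (ζ : C(ℝ≥0, X) → ℝ) (S : X → Set C(ℝ≥0, X)) (x : X) : Set C(ℝ≥0, X) :=
  {u | u ∈ S x ∧ ∀ v ∈ S x, ζ v ≤ ζ u}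

def DP {X : Type*} [NormedAddCommGroup X] (ζ : C(ℝ≥0, X) → ℝ) : Prop :=
  ∀ t : ℝ≥0, ∃ c : ℝ, 0 < c ∧ ∀ w w' : C(ℝ≥0, X), (∀ r ≤ t, w r = w' r) →
    ζ w - c * ζ (shiftP t w) = ζ w' - c * ζ (shiftP t w')

lemma Good.argm {X : Type*} [NormedAddCommGroup X] [MeasurableSpace X]
    {S : X → Set C(ℝ≥0, X)} (hS : Good S) {ζ : C(ℝ≥0, X) → ℝ} (hζ : Continuous ζ)
    (hdp : DP ζ) : Good (argm ζ S) := by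
  have hmax : ∀ x, ∀ u ∈ S x, ∀ t, ∀ v ∈ S (u t),
      ∃ c : ℝ, 0 < c ∧ ζ (spliceP t u v) - ζ u = c * (ζ v - ζ (shiftP t u)) := by
    intro x u hu t v hv
    obtain ⟨c, hc, h⟩ := hdp t
    have h0 : v 0 = u t := hS.start _ v hv
    have := h (spliceP t u v) u (fun r hr => spliceP_apply_le _ _ _ _ hr)
    rw [shiftP_spliceP _ _ _ h0] at this
    exact ⟨c, hc, by linarith⟩
  refine ⟨?_, ?_, ?_, ?_, ?_, ?_⟩
  · intro x
    obtain ⟨u, hu, hm⟩ := (hS.cpt x).exists_isMaxOn (hS.ne x) hζ.continuousOn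
    exact ⟨u, hu, fun v hv => hm hv⟩
  · intro x
    have : SFS.argm ζ S x = S x ∩ ⋂ v ∈ S x, {u | ζ v ≤ ζ u} := by
      ext u; simp [SFS.argm]
    rw [this]
    refine (hS.cpt x).inter_right ?_
    exact isClosed_biInter fun v _ => isClosed_le continuous_const hζ
  · intro x u hu
    exact hS.start x u hu.1
  · intro C hC
    have hset : {x | (SFS.argm ζ S x ∩ C).Nonempty} =
        {x | (S x ∩ C).Nonempty} ∩ ⋂ q : ℚ, ({x | (S x ∩ {u | (q : ℝ) ≤ ζ u}).Nonempty}ᶜ ∪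
          {x | (S x ∩ (C ∩ {u | (q : ℝ) ≤ ζ u})).Nonempty}) := by
      ext x
      simp only [mem_ofPred_eq, mem_inter_iff, mem_iInter, mem_union, mem_compl_iff]
      constructor
      · rintro ⟨u, ⟨hu, hm⟩, huC⟩
        refine ⟨⟨u, hu, huC⟩, fun q => ?_⟩
        by_cases hq : (q : ℝ) ≤ ζ u
        · exact Or.inr ⟨u, hu, huC, hq⟩
        · left
          rintro ⟨v, hv, hvq⟩
          exact hq (le_trans hvq (hm v hv))
      · rintro ⟨hne, hq⟩
        obtain ⟨u, hu, hm⟩ := ((hS.cpt x).inter_right hC).exists_isMaxOn hne hζ.continuousOn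
        refine ⟨u, ⟨hu.1, fun v hv => ?_⟩, hu.2⟩
        by_contra! hlt
        obtain ⟨q, hq1, hq2⟩ := exists_rat_btwn hlt
        rcases hq q with h | ⟨w, hw, hwC, hwq⟩
        · exact h ⟨v, hv, hq2.le⟩
        · have := hm ⟨hw, hwC⟩
          simp only [mem_ofPred_eq] at this hwq
          linarith
    rw [hset]
    refine (hS.meas C hC).inter (MeasurableSet.iInter fun q => ?_)
    exact (hS.meas _ (isClosed_le continuous_const hζ)).compl.union
      (hS.meas _ (hC.inter (isClosed_le continuous_const hζ)))
  · intro x u hu t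
    refine ⟨hS.shift x u hu.1 t, fun v hv => ?_⟩
    obtain ⟨c, hc, h⟩ := hmax x u hu.1 t v hv
    have := hu.2 _ (hS.splice x u hu.1 t v hv)
    by_contra! hlt
    have : 0 < c * (ζ v - ζ (shiftP t u)) := mul_pos hc (by linarith)
    linarith
  · intro x u hu t v hv
    refine ⟨hS.splice x u hu.1 t v hv.1, fun w hw => ?_⟩
    obtain ⟨c, hc, h⟩ := hmax x u hu.1 t v hv.1
    have h1 := hv.2 _ (hS.shift x u hu.1 t)
    have h2 := hu.2 w hw
    have : 0 ≤ c * (ζ v - ζ (shiftP t u)) := mul_nonneg hc.le (by linarith)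
    linarith

def iterS {X : Type*} [NormedAddCommGroup X]
    (ζ : ℕ → C(ℝ≥0, X) → ℝ) (S : X → Set C(ℝ≥0, X)) : ℕ → X → Set C(ℝ≥0, X)
  | 0 => S
  | n + 1 => argm (ζ n) (iterS ζ S n)

theorem selection {X : Type*} [NormedAddCommGroup X] [MeasurableSpace X]
    {S : X → Set C(ℝ≥0, X)} (hS : Good S) (ζ : ℕ → C(ℝ≥0, X) → ℝ) (hζ : ∀ n, Continuous (ζ n))
    (hdp : ∀ n, DP (ζ n)) (hsep : ∀ u v, (∀ n, ζ n u = ζ n v) → u = v) :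
    ∃ u : X → IPath X, Measurable u ∧ (∀ x, u x ∈ S x) ∧
      ∀ x, ∀ t₁ t₂ : ℝ≥0, u (u x t₁) t₂ = u x (t₁ + t₂) := by
  have hG : ∀ n, Good (iterS ζ S n) := by
    intro n
    induction n with
    | zero => exact hS
    | succ n ih => exact ih.argm (hζ n) (hdp n)
  have hanti : ∀ x n, iterS ζ S (n + 1) x ⊆ iterS ζ S n x := fun x n u hu => hu.1
  have hcap : ∀ x C, IsClosed C → (∀ n, (iterS ζ S n x ∩ C).Nonempty) →
      (⋂ n, (iterS ζ S n x ∩ C)).Nonempty := by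
    intro x C hC h
    refine IsCompact.nonempty_iInter_of_sequence_nonempty_isCompact_isClosed _ ?_ h ?_ ?_
    · exact fun n => inter_subset_inter_left _ (hanti x n)
    · exact ((hG 0).cpt x).inter_right hC
    · exact fun n => ((hG n).cpt x).isClosed.inter hC
  have hne : ∀ x, ∃ u, ∀ n, u ∈ iterS ζ S n x := by
    intro x
    obtain ⟨u, hu⟩ := hcap x univ isClosed_univ (fun n => by simpa using (hG n).ne x)
    exact ⟨u, fun n => (mem_iInter.1 hu n).1⟩
  have huniq : ∀ x u v, (∀ n, u ∈ iterS ζ S n x) → (∀ n, v ∈ iterS ζ S n x) → u = v := by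
    intro x u v hu hv
    refine hsep u v fun n => le_antisymm ?_ ?_
    · exact (hv (n + 1)).2 u (hu n)
    · exact (hu (n + 1)).2 v (hv n)
  choose f hf using hne
  refine ⟨f, ?_, fun x => hf x 0, ?_⟩
  · refine measurable_of_isClosed fun C hC => ?_
    have : f ⁻¹' C = ⋂ n, {x | (iterS ζ S n x ∩ C).Nonempty} := by
      ext x
      simp only [mem_preimage, mem_iInter, mem_ofPred_eq]
      constructor
      · exact fun h n => ⟨f x, hf x n, h⟩
      · intro h
        obtain ⟨u, hu⟩ := hcap x C hC h
        rw [mem_iInter] at hu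
        rw [huniq x (f x) u (hf x) (fun n => (hu n).1)]
        exact (hu 0).2
    rw [this]
    exact MeasurableSet.iInter fun n => (hG n).meas C hC
  · intro x t₁ t₂
    have : f (f x t₁) = shiftP t₁ (f x) :=
      huniq _ _ _ (hf _) (fun n => (hG n).shift x _ (hf x n) t₁)
    rw [this]; rfl

lemma lap_integrable {H : ℝ → ℝ} (hH : Continuous H) {B : ℝ} (hB : ∀ s, |H s| ≤ B) (n : ℕ) :
    IntegrableOn (fun s => Real.exp (-(n + 1 : ℝ) * s) * H s) (Ioi (0 : ℝ)) := by
  refine Integrable.mul_bdd (c := B) (exp_neg_integrableOn_Ioi 0 (by positivity)) ?_ ?_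
  · exact hH.aestronglyMeasurable
  · exact Eventually.of_forall hB

lemma lap_poly {H : ℝ → ℝ} (hH : Continuous H) {B : ℝ} (hB : ∀ s, |H s| ≤ B)
    (h0 : ∀ n : ℕ, ∫ s in Ioi (0 : ℝ), Real.exp (-(n + 1 : ℝ) * s) * H s = 0) (p : Polynomial ℝ) :
    IntegrableOn (fun s => p.eval (Real.exp (-s)) * (Real.exp (-s) * H s)) (Ioi (0 : ℝ)) ∧
    ∫ s in Ioi (0 : ℝ), p.eval (Real.exp (-s)) * (Real.exp (-s) * H s) = 0 := by
  have key : (fun s => p.eval (Real.exp (-s)) * (Real.exp (-s) * H s)) =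
      fun s => ∑ i ∈ Finset.range (p.natDegree + 1),
        p.coeff i * (Real.exp (-(i + 1 : ℝ) * s) * H s) := by
    funext s
    rw [Polynomial.eval_eq_sum_range, Finset.sum_mul]
    refine Finset.sum_congr rfl fun i _ => ?_
    rw [← Real.exp_nat_mul, mul_assoc, ← mul_assoc (Real.exp _), ← Real.exp_add]
    congr 4
    ring
  rw [key]
  constructor
  · exact integrable_finsetSum _ fun i _ => (lap_integrable hH hB i).const_mul _
  · rw [integral_finsetSum _ fun i _ => (lap_integrable hH hB i).const_mul _]
    refine Finset.sum_eq_zero fun i _ => ?_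
    rw [integral_const_mul, h0, mul_zero]

lemma lap_unique {H : ℝ → ℝ} (hH : Continuous H) {B : ℝ} (hB : ∀ s, |H s| ≤ B)
    (h0 : ∀ n : ℕ, ∫ s in Ioi (0 : ℝ), Real.exp (-(n + 1 : ℝ) * s) * H s = 0) :
    ∀ s, 0 < s → H s = 0 := by
  have hB0 : 0 ≤ B := (abs_nonneg _).trans (hB 0)
  -- the test function
  let f : ℝ → ℝ := fun y => y * H (-Real.log y)
  have hf : ContinuousOn f (Icc 0 1) := by
    intro y hy
    apply ContinuousAt.continuousWithinAt
    by_cases hy0 : y = 0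
    · subst hy0
      have : Tendsto f (𝓝 0) (𝓝 0) := by
        refine squeeze_zero_norm (a := fun y => |y| * B) (fun y => ?_) ?_
        · simp only [f, norm_mul, Real.norm_eq_abs]
          exact mul_le_mul_of_nonneg_left (hB _) (abs_nonneg _)
        · have : Continuous fun y : ℝ => |y| * B := by fun_prop
          simpa using this.tendsto 0
      simpa [ContinuousAt, f] using this
    · have : ContinuousAt Real.log y := Real.continuousAt_log hy0
      exact continuousAt_id.mul (hH.continuousAt.comp this.neg)
  let g : ℝ → ℝ := fun s => Real.exp (-s) * H s
  have hgi : IntegrableOn g (Ioi 0) := by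
    simpa [g] using lap_integrable hH hB 0
  have hgc : Continuous g := by fun_prop
  have hgb : ∀ s, 0 ≤ s → |g s| ≤ B := by
    intro s hs
    simp only [g, abs_mul, Real.abs_exp]
    have : Real.exp (-s) ≤ 1 := Real.exp_le_one_iff.2 (by linarith)
    calc _ ≤ 1 * B := mul_le_mul this (hB s) (abs_nonneg _) zero_le_one
      _ = B := one_mul _
  have hg2i : IntegrableOn (fun s => g s * g s) (Ioi 0) := by
    refine Integrable.bdd_mul (c := B) hgi hgc.aestronglyMeasurable ?_
    filter_upwards [ae_restrict_mem measurableSet_Ioi] with s hs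
    exact hgb s (le_of_lt hs)
  have hfg : ∀ s, f (Real.exp (-s)) = g s := by
    intro s; simp [f, g]
  have hzero : ∫ s in Ioi (0 : ℝ), g s * g s = 0 := by
    have hle : ∀ ε > 0, |∫ s in Ioi (0 : ℝ), g s * g s| ≤ ε * ∫ s in Ioi (0 : ℝ), |g s| := by
      intro ε hε
      obtain ⟨p, hp⟩ := exists_polynomial_near_of_continuousOn 0 1 f hf ε hε
      obtain ⟨hpi, hp0⟩ := lap_poly hH hB h0 p
      have : ∫ s in Ioi (0 : ℝ), g s * g s =
          ∫ s in Ioi (0 : ℝ), (g s * g s - p.eval (Real.exp (-s)) * g s) := by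
        rw [integral_sub hg2i hpi]
        simp only [g] at hp0 ⊢
        rw [hp0, sub_zero]
      rw [this, ← integral_const_mul, ← Real.norm_eq_abs]
      refine norm_integral_le_of_norm_le (hgi.abs.const_mul ε) ?_
      filter_upwards [ae_restrict_mem measurableSet_Ioi] with s hs
      rw [← sub_mul, norm_mul, Real.norm_eq_abs, Real.norm_eq_abs, abs_sub_comm]
      refine mul_le_mul_of_nonneg_right ?_ (abs_nonneg _)
      rw [← hfg]
      refine (hp _ ⟨(Real.exp_pos _).le, ?_⟩).le
      exact Real.exp_le_one_iff.2 (by have := mem_Ioi.1 hs; linarith)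
    have ht : Tendsto (fun ε : ℝ => ε * ∫ s in Ioi (0 : ℝ), |g s|) (𝓝[>] 0) (𝓝 0) := by
      have : Continuous fun ε : ℝ => ε * ∫ s in Ioi (0 : ℝ), |g s| := by fun_prop
      simpa using (this.tendsto 0).mono_left nhdsWithin_le_nhds
    have := ge_of_tendsto ht (eventually_nhdsWithin_of_forall fun ε hε => hle ε hε)
    exact abs_nonpos_iff.1 this
  have hae : (fun s => g s * g s) =ᵐ[volume.restrict (Ioi 0)] 0 :=
    (integral_eq_zero_iff_of_nonneg (fun s => mul_self_nonneg _) hg2i).1 hzero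
  have heq : EqOn (fun s => g s * g s) 0 (Ioi 0) :=
    Measure.eqOn_open_of_ae_eq hae isOpen_Ioi (by fun_prop) continuousOn_const
  intro s hs
  have := heq hs
  simpa [g, Real.exp_ne_zero] using this

/-- Laplace functional -/
def lap {X : Type*} [TopologicalSpace X] (φ : X → ℝ) (n : ℕ) (u : C(ℝ≥0, X)) : ℝ :=
  ∫ s in Ioi (0 : ℝ), Real.exp (-(n + 1 : ℝ) * s) * φ (u s.toNNReal)

lemma lap_continuous {X : Type*} [NormedAddCommGroup X] {φ : X → ℝ} (hφ : Continuous φ) {B : ℝ}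
    (hB : ∀ x, |φ x| ≤ B) (n : ℕ) : Continuous (lap φ n) := by
  refine continuous_of_dominated (bound := fun s => Real.exp (-(n + 1 : ℝ) * s) * B) ?_ ?_ ?_ ?_
  · intro u
    exact Continuous.aestronglyMeasurable (by fun_prop)
  · intro u
    refine Eventually.of_forall fun s => ?_
    rw [norm_mul, Real.norm_eq_abs, Real.abs_exp]
    exact mul_le_mul_of_nonneg_left (hB _) (Real.exp_pos _).le
  · exact (exp_neg_integrableOn_Ioi 0 (by positivity)).mul_const _
  · refine Eventually.of_forall fun s => ?_
    have : Continuous fun u : C(ℝ≥0, X) => u s.toNNReal := continuous_eval_const _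
    fun_prop

lemma lap_DP {X : Type*} [NormedAddCommGroup X] {φ : X → ℝ} (hφ : Continuous φ) {B : ℝ}
    (hB : ∀ x, |φ x| ≤ B) (n : ℕ) : DP (lap φ n) := by
  intro t
  refine ⟨Real.exp (-(n + 1 : ℝ) * t), Real.exp_pos _, ?_⟩
  have key : ∀ w : C(ℝ≥0, X), lap φ n w - Real.exp (-(n + 1 : ℝ) * t) * lap φ n (shiftP t w) =
      ∫ s in Ioc (0 : ℝ) t, Real.exp (-(n + 1 : ℝ) * s) * φ (w s.toNNReal) := by
    intro w
    have hi := lap_integrable (H := fun s => φ (w s.toNNReal)) (by fun_prop) (fun s => hB _) n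
    have h1 : lap φ n w = (∫ s in Ioc (0 : ℝ) t, Real.exp (-(n + 1 : ℝ) * s) * φ (w s.toNNReal)) +
        ∫ s in Ioi (t : ℝ), Real.exp (-(n + 1 : ℝ) * s) * φ (w s.toNNReal) := by
      rw [← setIntegral_union Ioc_disjoint_Ioi_same measurableSet_Ioi
        (hi.mono_set Ioc_subset_Ioi_self) (hi.mono_set (Ioi_subset_Ioi t.coe_nonneg)),
        Ioc_union_Ioi_eq_Ioi t.coe_nonneg]
      rfl
    have h2 : ∫ s in Ioi (t : ℝ), Real.exp (-(n + 1 : ℝ) * s) * φ (w s.toNNReal) =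
        Real.exp (-(n + 1 : ℝ) * t) * lap φ n (shiftP t w) := by
      have := (measurePreserving_add_left volume (t : ℝ)).setIntegral_preimage_emb
        (measurableEmbedding_addLeft (t : ℝ))
        (fun s => Real.exp (-(n + 1 : ℝ) * s) * φ (w s.toNNReal)) (Ioi (t : ℝ))
      simp only [preimage_const_add_Ioi, sub_self] at this
      rw [← this, lap, ← integral_const_mul]
      refine setIntegral_congr_fun measurableSet_Ioi fun s hs => ?_
      have hs' : 0 ≤ s := le_of_lt hs
      simp only [shiftP_apply]
      rw [Real.toNNReal_add t.coe_nonneg hs', Real.toNNReal_coe, ← mul_assoc, ← Real.exp_add]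
      congr 2
      ring
    rw [h1, h2]; ring
  intro w w' h
  rw [key, key]
  refine setIntegral_congr_fun measurableSet_Ioc fun s hs => ?_
  have : w s.toNNReal = w' s.toNNReal := h _ (Real.toNNReal_le_iff_le_coe.2 hs.2)
  simp only [this]

lemma lap_sep {X : Type*} [NormedAddCommGroup X] {φ : X → ℝ} (hφ : Continuous φ) {B : ℝ}
    (hB : ∀ x, |φ x| ≤ B) (u v : C(ℝ≥0, X)) (h : ∀ n, lap φ n u = lap φ n v) (t : ℝ≥0) :
    φ (u t) = φ (v t) := by
  have hu := fun n => lap_integrable (H := fun s => φ (u s.toNNReal)) (by fun_prop) (fun s => hB _) n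
  have hv := fun n => lap_integrable (H := fun s => φ (v s.toNNReal)) (by fun_prop) (fun s => hB _) n
  have := lap_unique (H := fun s => φ (u s.toNNReal) - φ (v s.toNNReal)) (B := B + B)
    (by fun_prop) (fun s => (abs_sub _ _).trans (add_le_add (hB _) (hB _))) (fun n => by
      simp only [mul_sub]
      rw [integral_sub (hu n) (hv n)]
      exact sub_eq_zero.2 (h n))
  have hc1 : Continuous fun s : ℝ => φ (u s.toNNReal) := by fun_prop
  have hc2 : Continuous fun s : ℝ => φ (v s.toNNReal) := by fun_prop
  have hcl : IsClosed {s : ℝ | φ (u s.toNNReal) = φ (v s.toNNReal)} := isClosed_eq hc1 hc2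
  have hsub : closure (Ioi (0 : ℝ)) ⊆ {s : ℝ | φ (u s.toNNReal) = φ (v s.toNNReal)} :=
    hcl.closure_subset_iff.2 fun s hs => sub_eq_zero.1 (this s hs)
  rw [closure_Ioi] at hsub
  simpa using hsub (show (t : ℝ) ∈ Ici (0 : ℝ) from t.2)

/-- The countable family. -/
def coordF (d : ℕ) (i : ℕ) (y : EuclideanSpace ℝ (Fin d)) : ℝ :=
  if h : i < d then Real.arctan (y ⟨i, h⟩) else 0

lemma coordF_cont (d i : ℕ) : Continuous (coordF d i) := by
  unfold coordF
  split_ifs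
  · exact Real.continuous_arctan.comp (by fun_prop)
  · exact continuous_const

lemma coordF_bdd (d i : ℕ) (y : EuclideanSpace ℝ (Fin d)) : |coordF d i y| ≤ Real.pi / 2 := by
  unfold coordF
  split_ifs
  · exact abs_le.2 ⟨(Real.neg_pi_div_two_lt_arctan _).le, (Real.arctan_lt_pi_div_two _).le⟩
  · simpa using (half_pos Real.pi_pos).le

theorem selection' {d : ℕ} {S : EuclideanSpace ℝ (Fin d) → Set C(ℝ≥0, EuclideanSpace ℝ (Fin d))}
    (hS : Good S) :
    ∃ u : EuclideanSpace ℝ (Fin d) → IPath (EuclideanSpace ℝ (Fin d)),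
      Measurable u ∧ (∀ x, u x ∈ S x) ∧
      ∀ x, ∀ t₁ t₂ : ℝ≥0, u (u x t₁) t₂ = u x (t₁ + t₂) := by
  refine selection hS (fun k => lap (coordF d k.unpair.1) k.unpair.2)
    (fun k => lap_continuous (coordF_cont _ _) (coordF_bdd _ _) _)
    (fun k => lap_DP (coordF_cont _ _) (coordF_bdd _ _) _) ?_
  intro u v h
  ext t i
  have := lap_sep (coordF_cont d i) (coordF_bdd d i) u v (fun n => by
    simpa using h (Nat.pair i n)) t
  simp only [coordF, i.2, dif_pos] at this
  exact Real.arctan_injective this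

section Hull

variable {E : Type*} [NormedAddCommGroup E] [NormedSpace ℝ E]

def Hull (F : E → Set E) (δ : ℝ≥0) (u : C(ℝ≥0, E)) : Prop :=
  ∀ s t : ℝ≥0, s < t → ∀ C : Set E, IsClosed C → Convex ℝ C →
    (∀ r : ℝ≥0, s ≤ r + δ → r ≤ t → F (u r) ⊆ C) → ((t - s : ℝ)⁻¹ • (u t - u s)) ∈ C

lemma hull_shift {F : E → Set E} {u : C(ℝ≥0, E)} (hu : Hull F 0 u) (a : ℝ≥0) :
    Hull F 0 (shiftP a u) := by
  intro s t hst C hC hCc h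
  have := hu (a + s) (a + t) (by gcongr) C hC hCc (fun r hr hrt => by
    have har : a ≤ r := by
      rw [add_zero] at hr
      exact le_trans (by simp) hr
    obtain ⟨b, rfl⟩ := exists_add_of_le har
    exact h b (by simpa using hr) (by simpa using hrt))
  simpa using this

lemma hull_splice {F : E → Set E} {u v : C(ℝ≥0, E)} (hu : Hull F 0 u) (hv : Hull F 0 v) (a : ℝ≥0)
    (hva : v 0 = u a) : Hull F 0 (spliceP a u v) := by
  intro s t hst C hC hCc h
  simp only [add_zero] at h
  have h1 : ∀ s' t' : ℝ≥0, s ≤ s' → s' < t' → t' ≤ a → t' ≤ t →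
      ((t' - s' : ℝ)⁻¹ • (u t' - u s')) ∈ C := by
    intro s' t' hss hs't hta htt
    refine hu s' t' hs't C hC hCc fun r hr hrt => ?_
    have := h r (by simpa using hss.trans (by simpa using hr)) (hrt.trans htt)
    rwa [spliceP_apply_le _ _ _ _ (hrt.trans hta)] at this
  have h2 : ∀ s' t' : ℝ≥0, s ≤ a + s' → s' < t' → a + t' ≤ t →
      ((t' - s' : ℝ)⁻¹ • (v t' - v s')) ∈ C := by
    intro s' t' hss hs't htt
    refine hv s' t' hs't C hC hCc fun r hr hrt => ?_
    have := h (a + r) (hss.trans (by simpa using hr)) (le_trans (by gcongr) htt)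
    rwa [spliceP_apply_add _ _ _ _ hva] at this
  rcases le_or_gt t a with hta | hat
  · rw [spliceP_apply_le _ _ _ _ hta, spliceP_apply_le _ _ _ _ (hst.le.trans hta)]
    exact h1 s t le_rfl hst hta le_rfl
  · obtain ⟨t', rfl⟩ := exists_add_of_le hat.le
    rcases le_or_gt a s with has | hsa
    · obtain ⟨s', rfl⟩ := exists_add_of_le has
      rw [spliceP_apply_add _ _ _ _ hva, spliceP_apply_add _ _ _ _ hva]
      have := h2 s' t' le_rfl (by simpa using hst) le_rfl
      simpa using this
    · rw [spliceP_apply_add _ _ _ _ hva, spliceP_apply_le _ _ _ _ hsa.le]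
      have ht' : 0 < t' := by simpa using hat
      have q1 := h1 s a le_rfl hsa le_rfl hat.le
      have q2 := h2 0 t' (by simpa using hsa.le) ht' le_rfl
      have hsa' : (0 : ℝ) < a - s := sub_pos.2 (by exact_mod_cast hsa)
      have ht'' : (0 : ℝ) < t' := by exact_mod_cast ht'
      have hpos : (0 : ℝ) < a + t' - s := by linarith
      have := hCc q1 q2 (a := (a - s : ℝ) / (a + t' - s)) (b := (t' : ℝ) / (a + t' - s))
        (by positivity) (by positivity) (by field_simp; ring)
      convert this using 1
      rw [smul_smul, smul_smul, hva]
      have e1 : (a - s : ℝ) / (a + t' - s) * (a - s : ℝ)⁻¹ = (a + t' - s : ℝ)⁻¹ := by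
        field_simp
      have e2 : (t' : ℝ) / (a + t' - s) * ((t' : ℝ) - (0 : ℝ≥0))⁻¹ = (a + t' - s : ℝ)⁻¹ := by
        simp; field_simp
      rw [e1, e2, ← smul_add]
      push_cast
      congr 1
      abel

lemma hull_lip {F : E → Set E} {ψ : ℝ → ℝ}
    (hψmono : ∀ a b : ℝ, 0 ≤ a → a ≤ b → ψ a ≤ ψ b)
    (hgrowth : ∀ y, ∀ v ∈ F y, ‖v‖ ≤ ψ ‖y‖)
    {δ : ℝ≥0} {u : C(ℝ≥0, E)} (hu : Hull F δ u) {s t : ℝ≥0} (hst : s ≤ t) {M : ℝ}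
    (hM : ∀ r ≤ t, ‖u r‖ ≤ M) : ‖u t - u s‖ ≤ ψ M * (t - s) := by
  rcases hst.eq_or_lt with rfl | hlt
  · simp
  have := hu s t hlt (Metric.closedBall 0 (ψ M)) Metric.isClosed_closedBall
    (convex_closedBall _ _) (fun r _ hrt v hv => by
      rw [mem_closedBall_zero_iff]
      exact (hgrowth _ v hv).trans (hψmono _ _ (norm_nonneg _) (hM r hrt)))
  have hpos : (0 : ℝ) < t - s := sub_pos.2 (by exact_mod_cast hlt)
  rw [mem_closedBall_zero_iff, norm_smul, norm_inv, Real.norm_of_nonneg hpos.le,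
    inv_mul_le_iff₀ hpos] at this
  linarith

lemma osgood {ψ : ℝ → ℝ}
    (hψc : ContinuousOn ψ (Ici (0 : ℝ)))
    (hψmono : ∀ a b : ℝ, 0 ≤ a → a ≤ b → ψ a ≤ ψ b)
    (hψpos : ∀ r : ℝ, 0 ≤ r → 0 < ψ r)
    (hNagumo : ¬ IntegrableOn (fun r => (ψ r)⁻¹) (Ici (0 : ℝ)) volume) (R T : ℝ) (hR : 0 ≤ R) :
    ∃ M : ℝ, ∀ m : ℝ → ℝ, Continuous m → (∀ t, 0 ≤ m t) → m 0 ≤ R →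
      (∀ s t, 0 ≤ s → s ≤ t → m s ≤ m t ∧ m t - m s ≤ ψ (m t) * (t - s)) →
      ∀ t, 0 ≤ t → t ≤ T → m t ≤ M := by
  let Q : ℝ → ℝ := fun r => ψ (max r 0)
  have hQc : Continuous Q := hψc.comp_continuous (by fun_prop) (fun r => mem_Ici.2 (le_max_right _ _))
  have hQpos : ∀ r, 0 < Q r := fun r => hψpos _ (le_max_right _ _)
  have hQmono : Monotone Q := fun a b h => hψmono _ _ (le_max_right _ _) (max_le_max_right _ h)
  let P : ℝ → ℝ := fun r => (Q r)⁻¹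
  have hPc : Continuous P := hQc.inv₀ (fun r => (hQpos r).ne')
  have hPpos : ∀ r, 0 < P r := fun r => inv_pos.2 (hQpos r)
  have hPanti : Antitone P := fun a b h => inv_anti₀ (hQpos a) (hQmono h)
  let G : ℝ → ℝ := fun r => ∫ x in (0 : ℝ)..r, P x
  have hPi : ∀ a b, IntervalIntegrable P volume a b := fun a b => hPc.intervalIntegrable a b
  have hGsub : ∀ a b, G b - G a = ∫ x in a..b, P x := fun a b =>
    intervalIntegral.integral_interval_sub_left (hPi _ _) (hPi _ _)
  have hGmono : Monotone G := by
    intro a b hab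
    have : 0 ≤ G b - G a := by
      rw [hGsub]
      exact intervalIntegral.integral_nonneg hab fun x _ => (hPpos x).le
    linarith
  have hGle : ∀ a b, a ≤ b → G b - G a ≤ P a * (b - a) := by
    intro a b hab
    rw [hGsub]
    have := intervalIntegral.integral_mono_on hab (hPi a b)
      (intervalIntegrable_const (c := P a)) (fun x hx => hPanti hx.1)
    simpa [mul_comm] using this
  have hGc : Continuous G := intervalIntegral.continuous_primitive hPi 0
  have hunb : ∀ K, ∃ M, K < G M := by
    intro K
    by_contra! hK
    apply hNagumo
    rw [integrableOn_Ici_iff_integrableOn_Ioi]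
    have : IntegrableOn P (Ioi 0) := by
      refine integrableOn_Ioi_of_intervalIntegral_norm_bounded (l := atTop) (b := fun r : ℝ => r)
        K 0 (fun i => (hPi 0 i).1) tendsto_id ?_
      refine Eventually.of_forall fun r => ?_
      simp only [Real.norm_of_nonneg (hPpos _).le]
      exact hK r
    refine this.congr_fun (fun r hr => ?_) measurableSet_Ioi
    simp only [P, Q, max_eq_left (le_of_lt (mem_Ioi.1 hr))]
  obtain ⟨M, hM⟩ := hunb (G R + T)
  refine ⟨M, fun m hmc hm0 hmR hm t ht htT => ?_⟩
  have key : G (m t) ≤ G (m 0) + t := by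
    refine image_le_of_liminf_slope_right_le_deriv_boundary (f := fun t => G (m t)) (a := 0) (b := t)
      (B := fun t => G (m 0) + t) (B' := fun _ => 1) (by fun_prop) (by simp) (by fun_prop) ?_ ?_
      ⟨ht, le_rfl⟩
    · intro x _
      exact ((hasDerivAt_id x).const_add (G (m 0))).hasDerivWithinAt
    · intro x hx r hr
      apply Eventually.frequently
      have hlim : Tendsto (fun z => Q (m z) * P (m x)) (𝓝[>] x) (𝓝 1) := by
        have : Continuous fun z => Q (m z) * P (m x) := by fun_prop
        have h2 := (this.tendsto x).mono_left (nhdsWithin_le_nhds (s := Ioi x))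
        simpa [P, (hQpos _).ne'] using h2
      filter_upwards [hlim.eventually_lt_const hr, self_mem_nhdsWithin] with z hz hxz
      refine lt_of_le_of_lt ?_ hz
      have hxz' : x < z := hxz
      obtain ⟨h1, h2⟩ := hm x z hx.1 hxz'.le
      rw [slope_def_field, div_le_iff₀ (by linarith)]
      refine (hGle _ _ h1).trans ?_
      have : Q (m z) = ψ (m z) := by simp only [Q, max_eq_left (hm0 z)]
      rw [this]
      calc _ ≤ P (m x) * (ψ (m z) * (z - x)) := mul_le_mul_of_nonneg_left h2 (hPpos _).le
        _ = _ := by ring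
  by_contra! hlt
  have := hGmono hlt.le
  have := hGmono hmR
  linarith

lemma apriori {F : E → Set E} {ψ : ℝ → ℝ}
    (hψc : ContinuousOn ψ (Ici (0 : ℝ)))
    (hψmono : ∀ a b : ℝ, 0 ≤ a → a ≤ b → ψ a ≤ ψ b)
    (hψpos : ∀ r : ℝ, 0 ≤ r → 0 < ψ r)
    (hNagumo : ¬ IntegrableOn (fun r => (ψ r)⁻¹) (Ici (0 : ℝ)) volume)
    (hgrowth : ∀ y, ∀ v ∈ F y, ‖v‖ ≤ ψ ‖y‖) (R : ℝ) (hR : 0 ≤ R) (T : ℝ≥0) :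
    ∃ M : ℝ, ∀ δ, ∀ u : C(ℝ≥0, E), Hull F δ u → ‖u 0‖ ≤ R → ∀ t ≤ T, ‖u t‖ ≤ M := by
  obtain ⟨M, hM⟩ := osgood hψc hψmono hψpos hNagumo R T hR
  refine ⟨M, fun δ u hu hu0 t htT => ?_⟩
  let m : ℝ → ℝ := fun t => sSup ((fun s : ℝ => ‖u (s * t).toNNReal‖) '' Icc 0 1)
  have hmc : Continuous m :=
    isCompact_Icc.continuous_sSup (f := fun t s : ℝ => ‖u (s * t).toNNReal‖) (by
      show Continuous fun p : ℝ × ℝ => ‖u (p.2 * p.1).toNNReal‖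
      fun_prop)
  have hbdd : ∀ t, BddAbove ((fun s : ℝ => ‖u (s * t).toNNReal‖) '' Icc 0 1) := fun t =>
    (isCompact_Icc.image (by fun_prop)).bddAbove
  have hle : ∀ t : ℝ, ∀ r : ℝ≥0, (r : ℝ) ≤ t → ‖u r‖ ≤ m t := by
    intro t r hr
    rcases eq_or_lt_of_le (r.coe_nonneg.trans hr) with h0 | hpos
    · have : r = 0 := by
        have : (r : ℝ) = 0 := le_antisymm (h0 ▸ hr) r.coe_nonneg
        exact_mod_cast this
      subst this
      exact le_csSup (hbdd t) ⟨0, by simp, by simp⟩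
    · refine le_csSup (hbdd t) ⟨r / t, ⟨by positivity, div_le_one_of_le₀ hr hpos.le⟩, ?_⟩
      simp [div_mul_cancel₀ _ hpos.ne']
  have hge : ∀ t : ℝ, 0 ≤ t → ∀ K, (∀ r : ℝ≥0, (r : ℝ) ≤ t → ‖u r‖ ≤ K) → m t ≤ K := by
    intro t ht K hK
    refine csSup_le ((nonempty_Icc.2 zero_le_one).image _) ?_
    rintro _ ⟨s, hs, rfl⟩
    refine hK _ ?_
    rw [Real.coe_toNNReal _ (mul_nonneg hs.1 ht)]
    exact mul_le_of_le_one_left ht hs.2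
  have hm0 : ∀ t, 0 ≤ m t := fun t =>
    (norm_nonneg _).trans (le_csSup (hbdd t) ⟨0, by simp, rfl⟩)
  refine (hle t t le_rfl).trans (hM m hmc hm0 ?_ ?_ t t.coe_nonneg (by exact_mod_cast htT))
  · refine hge 0 le_rfl _ fun r hr => ?_
    have : r = 0 := by
      have : (r : ℝ) = 0 := le_antisymm hr r.coe_nonneg
      exact_mod_cast this
    rwa [this]
  · intro s t hs hst
    refine ⟨hge s hs _ fun r hr => hle t r (hr.trans hst), ?_⟩
    suffices m t ≤ m s + ψ (m t) * (t - s) by linarith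
    have hψ0 : 0 < ψ (m t) := hψpos _ (hm0 t)
    refine hge t (hs.trans hst) _ fun r hr => ?_
    rcases le_total (r : ℝ) s with h | h
    · have := hle s r h
      have : 0 ≤ ψ (m t) * (t - s) := mul_nonneg hψ0.le (by linarith)
      linarith
    · lift s to ℝ≥0 using hs
      have h1 := hull_lip hψmono hgrowth hu (s := s) (t := r) (by exact_mod_cast h) (M := m t)
        (fun q hq => hle t q (le_trans (by exact_mod_cast hq) hr))
      have h2 := hle s s le_rfl
      have h3 : ‖u r‖ ≤ ‖u s‖ + ‖u r - u s‖ := norm_le_norm_add_norm_sub' _ _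
      have h4 : ψ (m t) * (r - s) ≤ ψ (m t) * (t - s) := by gcongr
      linarith

lemma relcompact [ProperSpace E] {F : E → Set E} {ψ : ℝ → ℝ}
    (hψc : ContinuousOn ψ (Ici (0 : ℝ)))
    (hψmono : ∀ a b : ℝ, 0 ≤ a → a ≤ b → ψ a ≤ ψ b)
    (hψpos : ∀ r : ℝ, 0 ≤ r → 0 < ψ r)
    (hNagumo : ¬ IntegrableOn (fun r => (ψ r)⁻¹) (Ici (0 : ℝ)) volume)
    (hgrowth : ∀ y, ∀ v ∈ F y, ‖v‖ ≤ ψ ‖y‖) (R : ℝ) (hR : 0 ≤ R) :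
    ∃ K : Set C(ℝ≥0, E), IsCompact K ∧
      ∀ δ, ∀ u : C(ℝ≥0, E), Hull F δ u → ‖u 0‖ ≤ R → u ∈ K := by
  choose M hM using apriori hψc hψmono hψpos hNagumo hgrowth R hR
  let A : Set (ℝ≥0 → E) := {f | (∀ t, ‖f t‖ ≤ M t) ∧
    ∀ s t T : ℝ≥0, s ≤ T → t ≤ T → dist (f s) (f t) ≤ ψ (M T) * dist s t}
  have hb : ∀ t0 : ℝ≥0, Tendsto (fun t : ℝ≥0 => ψ (M (t0 + 1)) * dist t0 t) (𝓝 t0) (𝓝 0) := by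
    intro t0
    have : Continuous fun t : ℝ≥0 => ψ (M (t0 + 1)) * dist t0 t := by fun_prop
    simpa using this.tendsto t0
  have hev : ∀ t0 : ℝ≥0, ∀ᶠ t in 𝓝 t0, ∀ f ∈ A, dist (f t0) (f t) ≤ ψ (M (t0 + 1)) * dist t0 t := by
    intro t0
    filter_upwards [Iio_mem_nhds (show t0 < t0 + 1 by simp)] with t ht f hf
    exact hf.2 t0 t (t0 + 1) (by simp) (le_of_lt ht)
  have hAcont : ∀ f ∈ A, Continuous f := by
    intro f hf
    rw [continuous_iff_continuousAt]
    intro t0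
    rw [ContinuousAt, tendsto_iff_dist_tendsto_zero]
    refine squeeze_zero' (Eventually.of_forall fun _ => dist_nonneg) ?_ (hb t0)
    filter_upwards [hev t0] with t ht
    rw [dist_comm]; exact ht f hf
  have hAcpt : IsCompact A := by
    have h1 : IsCompact (Set.pi univ fun t : ℝ≥0 => Metric.closedBall (0 : E) (M t)) :=
      isCompact_univ_pi fun t => isCompact_closedBall _ _
    refine h1.of_isClosed_subset ?_ ?_
    · have : A = (⋂ t, {f | ‖f t‖ ≤ M t}) ∩ ⋂ s, ⋂ t, ⋂ T, ⋂ (_ : s ≤ T), ⋂ (_ : t ≤ T),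
          {f | dist (f s) (f t) ≤ ψ (M T) * dist s t} := by
        ext f; simp [A]
      rw [this]
      refine (isClosed_iInter fun t => isClosed_le (by fun_prop) continuous_const).inter ?_
      refine isClosed_iInter fun s => isClosed_iInter fun t => isClosed_iInter fun T =>
        isClosed_iInter fun _ => isClosed_iInter fun _ => isClosed_le (by fun_prop) continuous_const
    · intro f hf t _
      rw [mem_closedBall_zero_iff]; exact hf.1 t
  refine ⟨{u | (u : ℝ≥0 → E) ∈ A}, ?_, ?_⟩
  · apply ArzelaAscoli.isCompact_of_equicontinuous
    · convert hAcpt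
      ext f
      constructor
      · rintro ⟨u, hu, rfl⟩; exact hu
      · intro hf; exact ⟨⟨f, hAcont f hf⟩, hf, rfl⟩
    · intro t0
      refine Metric.equicontinuousAt_of_continuity_modulus _ (hb t0) _ ?_
      filter_upwards [hev t0] with t ht
      rintro ⟨u, hu⟩
      exact ht u hu
  · intro δ u hu hu0
    have hlip : ∀ s t T : ℝ≥0, s ≤ t → t ≤ T → dist (u s) (u t) ≤ ψ (M T) * dist s t := by
      intro s t T hst htT
      have := hull_lip hψmono hgrowth hu hst (M := M T)
        (fun r hr => hM T δ u hu hu0 r (hr.trans htT))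
      rw [dist_comm, dist_eq_norm, dist_comm s t, NNReal.dist_eq, abs_of_nonneg]
      · exact this
      · exact sub_nonneg.2 (by exact_mod_cast hst)
    refine ⟨fun t => hM t δ u hu hu0 t le_rfl, fun s t T hs ht => ?_⟩
    rcases le_total s t with h | h
    · exact hlip s t T h ht
    · rw [dist_comm, dist_comm s t]; exact hlip t s T h hs

lemma isOpen_usc {F : E → Set E}
    (hFusc : ∀ y, ∀ V : Set E, IsOpen V → F y ⊆ V → ∃ U ∈ nhds y, ∀ y' ∈ U, F y' ⊆ V)
    {V : Set E} (hV : IsOpen V) : IsOpen {y | F y ⊆ V} := by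
  rw [isOpen_iff_mem_nhds]
  intro y hy
  obtain ⟨U, hU, h⟩ := hFusc y V hV hy
  exact mem_of_superset hU h

lemma hull_closed {F : E → Set E}
    (hFusc : ∀ y, ∀ V : Set E, IsOpen V → F y ⊆ V → ∃ U ∈ nhds y, ∀ y' ∈ U, F y' ⊆ V)
    {v : ℕ → C(ℝ≥0, E)} {u : C(ℝ≥0, E)} {δ : ℕ → ℝ≥0} (hδ : Tendsto δ atTop (𝓝 0))
    (hv : Tendsto v atTop (𝓝 u)) (hh : ∀ n, Hull F (δ n) (v n)) : Hull F 0 u := by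
  intro s t hst C hC hCc h
  simp only [add_zero] at h
  have hall : ∀ ε > 0, ((t - s : ℝ)⁻¹ • (u t - u s)) ∈ Metric.cthickening ε C := by
    intro ε hε
    have hW := isOpen_usc hFusc (Metric.isOpen_thickening (δ := ε) (E := C))
    have hsub : Icc s t ⊆ u ⁻¹' {y | F y ⊆ Metric.thickening ε C} := by
      intro r hr
      exact (h r hr.1 hr.2).trans (Metric.self_subset_thickening hε C)
    obtain ⟨η, hη, hηsub⟩ := isCompact_Icc.exists_cthickening_subset_open
      (hW.preimage u.continuous) hsub
    have hK : IsCompact (Metric.cthickening η (Icc s t)) := isCompact_Icc.cthickening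
    have hev := ContinuousMap.tendsto_nhds_compactOpen.1 hv _ hK _ hW hηsub
    have hδ' : ∀ᶠ n in atTop, δ n < ⟨η, hη.le⟩ := hδ.eventually_lt_const (by exact hη)
    have hlim : Tendsto (fun n => (t - s : ℝ)⁻¹ • (v n t - v n s)) atTop
        (𝓝 ((t - s : ℝ)⁻¹ • (u t - u s))) := by
      have h1 := ((continuous_eval_const t).tendsto u).comp hv
      have h2 := ((continuous_eval_const s).tendsto u).comp hv
      exact (h1.sub h2).const_smul _
    refine (Metric.isClosed_cthickening (δ := ε) (E := C)).mem_of_tendsto hlim ?_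
    filter_upwards [hev, hδ'] with n hn hδn
    refine hh n s t hst _ Metric.isClosed_cthickening (hCc.cthickening ε) fun r hr hrt => ?_
    refine Subset.trans (hn ?_ : F (v n r) ⊆ _) (Metric.thickening_subset_cthickening _ _)
    rcases le_total s r with hsr | hrs
    · exact Metric.self_subset_cthickening _ ⟨hsr, hrt⟩
    · refine Metric.mem_cthickening_of_dist_le r s η _ ⟨le_rfl, hst.le⟩ ?_
      rw [dist_comm, NNReal.dist_eq, abs_of_nonneg (sub_nonneg.2 (by exact_mod_cast hrs))]
      have h1 : (s : ℝ) ≤ r + δ n := by exact_mod_cast hr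
      have h2 : (δ n : ℝ) < η := hδn
      linarith
  have := Metric.closure_eq_iInter_cthickening C
  rw [hC.closure_eq] at this
  rw [this]
  simpa using hall

lemma hull_deriv {F : E → Set E} (hFcpt : ∀ y, IsCompact (F y))
    (hFconv : ∀ y, Convex ℝ (F y))
    (hFusc : ∀ y, ∀ V : Set E, IsOpen V → F y ⊆ V → ∃ U ∈ nhds y, ∀ y' ∈ U, F y' ⊆ V)
    {u : C(ℝ≥0, E)} (hu : Hull F 0 u) {s : ℝ} (hs : 0 < s)
    (hd : DifferentiableAt ℝ (fun s : ℝ => u s.toNNReal) s) :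
    deriv (fun s : ℝ => u s.toNNReal) s ∈ F (u s.toNNReal) := by
  have hall : ∀ ε > 0, deriv (fun s : ℝ => u s.toNNReal) s ∈
      Metric.cthickening ε (F (u s.toNNReal)) := by
    intro ε hε
    have hW := isOpen_usc hFusc (Metric.isOpen_thickening (δ := ε) (E := F (u s.toNNReal)))
    have hc : Continuous fun s : ℝ => u s.toNNReal := by fun_prop
    have hnh := (hW.preimage hc).mem_nhds (show s ∈ _ from Metric.self_subset_thickening hε _)
    obtain ⟨η, hη, hηs⟩ := Metric.mem_nhds_iff.1 hnh
    have hsl := (hasDerivAt_iff_tendsto_slope.1 hd.hasDerivAt).mono_left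
      (nhdsWithin_mono s (fun z (hz : s < z) => hz.ne') : 𝓝[>] s ≤ 𝓝[≠] s)
    refine (Metric.isClosed_cthickening (δ := ε) (E := F (u s.toNNReal))).mem_of_tendsto hsl ?_
    filter_upwards [Ioo_mem_nhdsGT (show s < s + η by linarith)] with z hz
    have hz0 : 0 < z := hs.trans hz.1
    have := hu s.toNNReal z.toNNReal ((Real.toNNReal_lt_toNNReal_iff hz0).2 hz.1) _
      (Metric.isClosed_cthickening (δ := ε) (E := F (u s.toNNReal))) ((hFconv _).cthickening ε)
      (fun r hr hrz => by
        rw [add_zero, Real.toNNReal_le_iff_le_coe] at hr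
        rw [Real.le_toNNReal_iff_coe_le hz0.le] at hrz
        have hmem : (r : ℝ) ∈ Metric.ball s η := by
          rw [Metric.mem_ball, Real.dist_eq, abs_of_nonneg (by linarith)]
          linarith [hz.2]
        have h2 := hηs hmem
        simp only [mem_preimage, Real.toNNReal_coe] at h2
        exact Subset.trans h2 (Metric.thickening_subset_cthickening _ _))
    rw [Real.coe_toNNReal _ hz0.le, Real.coe_toNNReal _ hs.le] at this
    simpa [slope_def_module] using this
  have := Metric.closure_eq_iInter_cthickening (F (u s.toNNReal))
  rw [(hFcpt _).isClosed.closure_eq] at this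
  rw [this]
  simpa using hall

lemma hull_of_integral [CompleteSpace E] {F : E → Set E} {δ : ℝ≥0} {u : C(ℝ≥0, E)} {g : ℝ → E}
    (hg : ∀ a b, IntervalIntegrable g volume a b)
    (hu : ∀ t : ℝ≥0, u t = u 0 + ∫ s in (0 : ℝ)..t, g s) (τ : ℝ → ℝ≥0)
    (hτ : ∀ s, 0 < s → (τ s : ℝ) ≤ s ∧ s ≤ τ s + δ) (hgF : ∀ s, 0 < s → g s ∈ F (u (τ s))) :
    Hull F δ u := by
  intro s t hst C hC hCc h
  have hst' : (s : ℝ) < t := by exact_mod_cast hst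
  have hsub : u t - u s = ∫ r in Ioc (s : ℝ) t, g r := by
    rw [← intervalIntegral.integral_of_le hst'.le, hu t, hu s, add_sub_add_left_eq_sub,
      intervalIntegral.integral_interval_sub_left (hg _ _) (hg _ _)]
  have := hCc.set_average_mem (μ := volume) (t := Ioc (s : ℝ) t) (f := g) hC
    (by simpa using hst') (by simp) (by
      filter_upwards [ae_restrict_mem measurableSet_Ioc] with r hr
      have hr0 : 0 < r := s.coe_nonneg.trans_lt hr.1
      obtain ⟨h1, h2⟩ := hτ r hr0
      refine h (τ r) ?_ ?_ (hgF r hr0)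
      · have : (s : ℝ) ≤ τ r + δ := hr.1.le.trans h2
        exact_mod_cast this
      · have : (τ r : ℝ) ≤ t := h1.trans hr.2
        exact_mod_cast this) (hg s t).1
  rw [setAverage_eq, Real.volume_real_Ioc_of_le hst'.le] at this
  rwa [hsub]

def eulerY (f0 : E → E) (x : E) (h : ℝ) : ℕ → E
  | 0 => x
  | k + 1 => eulerY f0 x h k + h • f0 (eulerY f0 x h k)

lemma euler [CompleteSpace E] {F : E → Set E} (hFne : ∀ y, (F y).Nonempty) (x : E) (n : ℕ) :
    ∃ u : C(ℝ≥0, E), u 0 = x ∧ Hull F (1 / (n + 1)) u := by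
  choose f0 hf0 using hFne
  let N : ℝ := n + 1
  have hN : 0 < N := by positivity
  let y := eulerY f0 x N⁻¹
  let c : ℕ → E := fun k => f0 (y k)
  let g : ℝ → E := fun s => c (⌈s * N⌉₊ - 1)
  have hgm : StronglyMeasurable g := by
    have h1 : StronglyMeasurable (fun k : ℕ => c (k - 1)) := StronglyMeasurable.of_discrete
    exact h1.comp_measurable (Nat.measurable_ceil.comp (measurable_id.mul_const N))
  have hg : ∀ a b, IntervalIntegrable g volume a b := by
    intro a b
    refine (intervalIntegrable_const
      (c := ∑ k ∈ Finset.range (⌈max a b * N⌉₊ + 1), ‖c k‖)).mono_fun'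
      hgm.aestronglyMeasurable ?_
    filter_upwards [ae_restrict_mem measurableSet_uIoc] with s hs
    refine Finset.single_le_sum (f := fun k => ‖c k‖) (fun k _ => norm_nonneg _) ?_
    rw [Finset.mem_range]
    have : ⌈s * N⌉₊ ≤ ⌈max a b * N⌉₊ := Nat.ceil_mono (by
      have := hs.2
      gcongr)
    omega
  have hceil : ∀ (k : ℕ) (s : ℝ), s ∈ Ioc (k * N⁻¹ : ℝ) ((k + 1 : ℕ) * N⁻¹) → g s = c k := by
    intro k s hs
    have : ⌈s * N⌉₊ = k + 1 := by
      rw [Nat.ceil_eq_iff (by omega)]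
      have h1 := hs.1
      have h2 := hs.2
      rw [← div_eq_mul_inv, div_lt_iff₀ hN] at h1
      rw [← div_eq_mul_inv, le_div_iff₀ hN] at h2
      exact ⟨by simpa using h1, h2⟩
    simp only [g, this, Nat.add_sub_cancel]
  have hy : ∀ k : ℕ, x + ∫ s in (0 : ℝ)..(k * N⁻¹), g s = y k := by
    intro k
    induction k with
    | zero => simp [y, eulerY]
    | succ k ih =>
      have hle : (k * N⁻¹ : ℝ) ≤ (k + 1 : ℕ) * N⁻¹ := by
        push_cast; gcongr; linarith
      rw [← intervalIntegral.integral_add_adjacent_intervals (hg 0 (k * N⁻¹)) (hg _ _),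
        ← add_assoc, ih, intervalIntegral.integral_of_le hle,
        setIntegral_congr_fun measurableSet_Ioc (fun s hs => hceil k s hs)]
      rw [← intervalIntegral.integral_of_le hle, intervalIntegral.integral_const]
      show y k + _ = y k + N⁻¹ • f0 (y k)
      congr 2
      push_cast; ring
  let u : C(ℝ≥0, E) := ⟨fun t => x + ∫ s in (0 : ℝ)..t, g s, by
    have := intervalIntegral.continuous_primitive hg 0
    fun_prop⟩
  have hu : ∀ t : ℝ≥0, u t = x + ∫ s in (0 : ℝ)..t, g s := fun t => rfl
  have hu0 : u 0 = x := by rw [hu]; simp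
  refine ⟨u, hu0, ?_⟩
  refine hull_of_integral hg (fun t => by rw [hu0]; exact hu t)
    (fun s => ((⌈s * N⌉₊ - 1 : ℕ) : ℝ≥0) * (1 / (n + 1))) ?_ ?_
  · intro s hs
    have hp : 0 < ⌈s * N⌉₊ := Nat.ceil_pos.2 (by positivity)
    obtain ⟨k, hk⟩ := Nat.exists_eq_succ_of_ne_zero hp.ne'
    have h3 := (Nat.ceil_eq_iff (by omega)).1 hk
    simp only [hk, Nat.succ_eq_add_one, Nat.add_sub_cancel] at h3 ⊢
    push_cast at h3 ⊢
    change (k : ℝ) * (1 / N) ≤ s ∧ s ≤ k * (1 / N) + 1 / N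
    constructor
    · rw [mul_one_div, div_le_iff₀ hN]; exact h3.1.le
    · rw [mul_one_div, ← add_div, le_div_iff₀ hN]; exact h3.2
  · intro s hs
    have : u (((⌈s * N⌉₊ - 1 : ℕ) : ℝ≥0) * (1 / (n + 1))) = y (⌈s * N⌉₊ - 1) := by
      generalize ⌈s * N⌉₊ - 1 = k
      rw [hu, ← hy]
      congr 2
      push_cast
      simp [N]
    rw [this]
    exact hf0 _

lemma good_hull [ProperSpace E] [MeasurableSpace E] [BorelSpace E] {F : E → Set E}
    (hFne : ∀ y, (F y).Nonempty)
    (hFusc : ∀ y, ∀ V : Set E, IsOpen V → F y ⊆ V → ∃ U ∈ nhds y, ∀ y' ∈ U, F y' ⊆ V)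
    {ψ : ℝ → ℝ}
    (hψc : ContinuousOn ψ (Ici (0 : ℝ)))
    (hψmono : ∀ a b : ℝ, 0 ≤ a → a ≤ b → ψ a ≤ ψ b)
    (hψpos : ∀ r : ℝ, 0 ≤ r → 0 < ψ r)
    (hNagumo : ¬ IntegrableOn (fun r => (ψ r)⁻¹) (Ici (0 : ℝ)) volume)
    (hgrowth : ∀ y, ∀ v ∈ F y, ‖v‖ ≤ ψ ‖y‖) :
    Good (fun x => {u : C(ℝ≥0, E) | u 0 = x ∧ Hull F 0 u}) := by
  have hrel := relcompact hψc hψmono hψpos hNagumo hgrowth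
  have hev0 : Continuous fun u : C(ℝ≥0, E) => u 0 := continuous_eval_const 0
  have hseq : ∀ (C : Set C(ℝ≥0, E)), IsClosed C → ∀ (v : ℕ → C(ℝ≥0, E)) (δ : ℕ → ℝ≥0) (x : E),
      Tendsto δ atTop (𝓝 0) → Tendsto (fun n => v n 0) atTop (𝓝 x) →
      (∀ n, Hull F (δ n) (v n)) → (∀ n, v n ∈ C) → ∃ u, u ∈ C ∧ u 0 = x ∧ Hull F 0 u := by
    intro C hC v δ x hδ hx hh hvC
    obtain ⟨R, hR⟩ := hx.norm.bddAbove_range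
    have hR' : ∀ n, ‖v n 0‖ ≤ R := fun n => hR ⟨n, rfl⟩
    obtain ⟨K, hK, hKm⟩ := hrel R ((norm_nonneg _).trans (hR' 0))
    obtain ⟨u, -, φ, hφ, hlim⟩ := hK.tendsto_subseq (fun n => hKm _ _ (hh n) (hR' n))
    refine ⟨u, hC.mem_of_tendsto hlim (Eventually.of_forall fun n => hvC _), ?_, ?_⟩
    · exact tendsto_nhds_unique ((hev0.tendsto u).comp hlim) (hx.comp hφ.tendsto_atTop)
    · exact hull_closed hFusc (hδ.comp hφ.tendsto_atTop) hlim (fun n => hh _)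
  have hcl : IsClosed {u : C(ℝ≥0, E) | Hull F 0 u} := by
    rw [← isSeqClosed_iff_isClosed]
    intro v u hv hlim
    exact hull_closed hFusc (δ := fun _ => 0) tendsto_const_nhds hlim hv
  refine ⟨?_, ?_, ?_, ?_, ?_, ?_⟩
  · intro x
    choose v hv0 hv using euler hFne x
    obtain ⟨u, -, hu⟩ := hseq univ isClosed_univ v (fun n => 1 / (n + 1)) x
      tendsto_one_div_add_atTop_nhds_zero_nat (by simp [hv0]) hv (fun _ => mem_univ _)
    exact ⟨u, hu⟩
  · intro x
    obtain ⟨K, hK, hKm⟩ := hrel ‖x‖ (norm_nonneg _)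
    refine hK.of_isClosed_subset ((isClosed_eq hev0 continuous_const).inter hcl) ?_
    rintro u ⟨rfl, hu⟩
    exact hKm 0 u hu le_rfl
  · exact fun x u hu => hu.1
  · intro C hC
    refine IsClosed.measurableSet ?_
    rw [← isSeqClosed_iff_isClosed]
    intro xs x hxs hlim
    choose v hv hvC using hxs
    obtain ⟨u, huC, hu⟩ := hseq C hC v (fun _ => 0) x tendsto_const_nhds
      (by simpa only [(hv _).1] using hlim) (fun n => (hv n).2) hvC
    exact ⟨u, hu, huC⟩
  · exact fun x u hu t => ⟨by simp, hull_shift hu.2 t⟩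
  · exact fun x u hu t v hv => ⟨by rw [spliceP_apply_le _ _ _ _ zero_le]; exact hu.1,
      hull_splice hu.2 hv.2 t hv.1⟩

end Hull

lemma hull_sol {d : ℕ} {F : EuclideanSpace ℝ (Fin d) → Set (EuclideanSpace ℝ (Fin d))}
    (hFcpt : ∀ y, IsCompact (F y))
    (hFconv : ∀ y, Convex ℝ (F y))
    (hFusc : ∀ y, ∀ V : Set (EuclideanSpace ℝ (Fin d)), IsOpen V → F y ⊆ V →
      ∃ U ∈ nhds y, ∀ y' ∈ U, F y' ⊆ V)
    {ψ : ℝ → ℝ}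
    (hψmono : ∀ a b : ℝ, 0 ≤ a → a ≤ b → ψ a ≤ ψ b)
    (hgrowth : ∀ y, ∀ v ∈ F y, ‖v‖ ≤ ψ ‖y‖) {x : EuclideanSpace ℝ (Fin d)}
    {u : C(ℝ≥0, EuclideanSpace ℝ (Fin d))} (hu0 : u 0 = x) (hu : Hull F 0 u) :
    InclusionSol F x u := by
  let f : ℝ → EuclideanSpace ℝ (Fin d) := fun s => u s.toNNReal
  have hfc : Continuous f := by fun_prop
  have hbd : ∀ T : ℝ≥0, ∃ M, ∀ r ≤ T, ‖u r‖ ≤ M := by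
    intro T
    obtain ⟨M, hM⟩ := (isCompact_Icc (a := (0 : ℝ≥0)) (b := T)).exists_bound_of_continuousOn
      u.continuous.continuousOn
    exact ⟨M, fun r hr => hM r ⟨zero_le, hr⟩⟩
  have hlip : ∀ T : ℝ≥0, ∃ L : ℝ≥0, LipschitzOnWith L f (uIcc (0 : ℝ) T) := by
    intro T
    obtain ⟨M, hM⟩ := hbd T
    have aux : ∀ a b : ℝ≥0, a ≤ b → b ≤ T → dist (u a) (u b) ≤ (ψ M).toNNReal * dist (a : ℝ) b := by
      intro a b hab hb
      have := hull_lip hψmono hgrowth hu hab (M := M) (fun r hr => hM r (hr.trans hb))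
      have hab' : (0 : ℝ) ≤ b - a := sub_nonneg.2 (by exact_mod_cast hab)
      rw [dist_comm, dist_eq_norm, dist_comm (a : ℝ), Real.dist_eq, abs_of_nonneg hab']
      exact this.trans (mul_le_mul_of_nonneg_right (Real.le_coe_toNNReal _) hab')
    refine ⟨(ψ M).toNNReal, LipschitzOnWith.of_dist_le_mul ?_⟩
    rw [uIcc_of_le T.coe_nonneg]
    intro a ha b hb
    have ha0 := ha.1
    have hb0 := hb.1
    lift a to ℝ≥0 using ha0
    lift b to ℝ≥0 using hb0
    simp only [f, Real.toNNReal_coe]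
    have haT : a ≤ T := by exact_mod_cast ha.2
    have hbT : b ≤ T := by exact_mod_cast hb.2
    rcases le_total a b with h | h
    · exact aux a b h hbT
    · rw [dist_comm, dist_comm (a : ℝ)]; exact aux b a h haT
  have hac : ∀ (T : ℝ≥0) (i : Fin d), AbsolutelyContinuousOnInterval (fun s => f s i) 0 T := by
    intro T i
    obtain ⟨L, hL⟩ := hlip T
    have h1 : LipschitzWith 1 (fun y : EuclideanSpace ℝ (Fin d) => y i) := by
      refine LipschitzWith.of_dist_le_mul fun y z => ?_
      rw [NNReal.coe_one, one_mul, dist_eq_norm, dist_eq_norm]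
      exact PiLp.norm_apply_le (y - z) i
    exact (h1.comp_lipschitzOnWith hL).absolutelyContinuousOnInterval
  have hdT : ∀ T : ℝ≥0, ∀ᵐ s, s ∈ uIcc (0 : ℝ) T → DifferentiableAt ℝ f s := by
    intro T
    have : ∀ᵐ s, ∀ i : Fin d, s ∈ uIcc (0 : ℝ) T → DifferentiableAt ℝ (fun s => f s i) s :=
      ae_all_iff.2 fun i => (hac T i).ae_differentiableAt
    filter_upwards [this] with s hs hsT
    exact differentiableAt_euclidean.2 fun i => hs i hsT
  have hd : ∀ᵐ s, 0 < s → DifferentiableAt ℝ f s := by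
    have : ∀ᵐ s, ∀ n : ℕ, s ∈ uIcc (0 : ℝ) (n : ℝ≥0) → DifferentiableAt ℝ f s :=
      ae_all_iff.2 fun n => hdT n
    filter_upwards [this] with s hs hs0
    obtain ⟨n, hn⟩ := exists_nat_ge s
    refine hs n ?_
    rw [uIcc_of_le (NNReal.coe_nonneg _)]
    exact ⟨hs0.le, by simpa using hn⟩
  have hmem : ∀ᵐ s, 0 < s → deriv f s ∈ F (u s.toNNReal) := by
    filter_upwards [hd] with s hs hs0
    exact hull_deriv hFcpt hFconv hFusc hu hs0 (hs hs0)
  have hint : ∀ T : ℝ≥0, IntegrableOn (deriv f) (Ioc (0 : ℝ) T) volume := by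
    intro T
    obtain ⟨M, hM⟩ := hbd T
    refine Measure.integrableOn_of_bounded (M := ψ M) (by simp)
      (stronglyMeasurable_deriv f).aestronglyMeasurable ?_
    filter_upwards [ae_restrict_mem measurableSet_Ioc, ae_restrict_of_ae hmem] with s hs hsF
    refine (hgrowth _ _ (hsF hs.1)).trans (hψmono _ _ (norm_nonneg _) (hM _ ?_))
    exact Real.toNNReal_le_iff_le_coe.2 hs.2
  refine ⟨hu0, deriv f, ?_, ?_, ?_⟩
  · intro T hT
    exact hint ⟨T, hT⟩
  · intro T
    ext i
    have h1 := (hac T i).integral_deriv_eq_sub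
    have h2 := (EuclideanSpace.proj (𝕜 := ℝ) i).integral_comp_comm (hint T)
    change ∫ s in Ioc (0 : ℝ) T, (deriv f s) i = (∫ s in Ioc (0 : ℝ) T, deriv f s) i at h2
    have h3 : ∫ s in Ioc (0 : ℝ) T, (deriv f s) i = ∫ s in Ioc (0 : ℝ) T, deriv (fun s => f s i) s := by
      refine integral_congr_ae ?_
      filter_upwards [ae_restrict_mem measurableSet_Ioc, ae_restrict_of_ae hd] with s hs hsd
      have hD := (hsd hs.1).hasDerivAt
      exact ((EuclideanSpace.proj (𝕜 := ℝ) i).hasFDerivAt.comp_hasDerivAt s hD).deriv.symm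
    rw [intervalIntegral.integral_of_le T.coe_nonneg, ← h3, h2] at h1
    simp only [f, Real.toNNReal_coe, Real.toNNReal_zero, hu0] at h1
    rw [PiLp.add_apply]
    simp only [f]
    linarith
  · rw [ae_restrict_iff' measurableSet_Ioi]
    exact hmem

end SFS

/-- **Semiflow selection for differential inclusions.**  Let `F : ℝ^d → 2^{ℝ^d}` be an
upper semicontinuous set-valued map with nonempty compact convex values satisfying a
Nagumo-type growth condition (`|v| ≤ ψ(|u|)` for `v ∈ F(u)` with `∫^∞ dr/ψ(r) = ∞`).
Then the solution funnels `S(x)` of `u' ∈ F(u)` admit a Borel measurable selection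
`𝔲` with the semigroup property `𝔲(t₂, 𝔲(t₁, x)) = 𝔲(t₁ + t₂, x)`. -/
theorem inclusion_semiflow_selection
    {d : ℕ} (F : EuclideanSpace ℝ (Fin d) → Set (EuclideanSpace ℝ (Fin d)))
    (hFne : ∀ y, (F y).Nonempty)
    (hFcpt : ∀ y, IsCompact (F y))
    (hFconv : ∀ y, Convex ℝ (F y))
    (hFusc : ∀ y, ∀ V : Set (EuclideanSpace ℝ (Fin d)), IsOpen V → F y ⊆ V →
      ∃ U ∈ nhds y, ∀ y' ∈ U, F y' ⊆ V)
    (ψ : ℝ → ℝ)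
    (hψc : ContinuousOn ψ (Ici (0 : ℝ)))
    (hψmono : ∀ a b : ℝ, 0 ≤ a → a ≤ b → ψ a ≤ ψ b)
    (hψpos : ∀ r : ℝ, 0 ≤ r → 0 < ψ r)
    (hNagumo : ¬ IntegrableOn (fun r => (ψ r)⁻¹) (Ici (0 : ℝ)) volume)
    (hgrowth : ∀ y, ∀ v ∈ F y, ‖v‖ ≤ ψ ‖y‖) :
    ∃ u : EuclideanSpace ℝ (Fin d) → IPath (EuclideanSpace ℝ (Fin d)),
      Measurable u ∧ (∀ x, InclusionSol F x (u x)) ∧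
      ∀ x, ∀ t₁ t₂ : ℝ≥0, u (u x t₁) t₂ = u x (t₁ + t₂) := by
  obtain ⟨u, hm, hu, hsg⟩ := SFS.selection'
    (SFS.good_hull hFne hFusc hψc hψmono hψpos hNagumo hgrowth)
  exact ⟨u, hm, fun x => SFS.hull_sol hFcpt hFconv hFusc hψmono hgrowth (hu x).1 (hu x).2, hsg⟩
end
end
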